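/- arXiv:1701.05817 — 3 statements merged into one kernel-verified Lean document; each statement's English description precedes it below -/
import Mathlib

section
/- Every finitely generated projective module over the Laurent polynomial ring k[x₁, x₁⁻¹, ..., xₐ, xₐ⁻¹] over a field k is free. -/
namespace LaurentQS
universe u v
open Polynomial

/-- Equivalence of vectors under invertible matrices. -/
def Rel {ι : Type*} [Fintype ι] [DecidableEq ι] {C : Type*} [CommRing C] (v w : ι → C) : Prop :=
  ∃ M : Matrix ι ι C, IsUnit M.det ∧ Matrix.mulVec M v = w

section rel
variable {ι : Type*} [Fintype ι] [DecidableEq ι] {C D : Type*} [CommRing C] [CommRing D]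

lemma Rel.refl (v : ι → C) : Rel v v := ⟨1, by simp, by simp⟩

lemma Rel.trans {u v w : ι → C} (h : Rel u v) (h' : Rel v w) : Rel u w := by
  obtain ⟨M, hM, rfl⟩ := h
  obtain ⟨N, hN, rfl⟩ := h'
  exact ⟨N * M, by rw [Matrix.det_mul]; exact hN.mul hM, by rw [Matrix.mulVec_mulVec]⟩

lemma Rel.symm {v w : ι → C} (h : Rel v w) : Rel w v := by
  obtain ⟨M, hM, rfl⟩ := h
  refine ⟨M⁻¹, ?_, ?_⟩
  · exact Matrix.isUnit_nonsing_inv_det M hM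
  · rw [Matrix.mulVec_mulVec, Matrix.nonsing_inv_mul M hM, Matrix.one_mulVec]

lemma Rel.map {v w : ι → C} (h : Rel v w) (f : C →+* D) :
    Rel (fun i => f (v i)) (fun i => f (w i)) := by
  obtain ⟨M, hM, rfl⟩ := h
  refine ⟨M.map f, ?_, ?_⟩
  · have := hM.map f
    rwa [RingHom.map_det] at this
  · ext i
    simp [Matrix.mulVec, dotProduct]

lemma Rel.smul_left (v : ι → C) {u : C} (hu : IsUnit u) : Rel v (u • v) := by
  refine ⟨Matrix.scalar ι u, ?_, ?_⟩
  · simp only [Matrix.scalar_apply, Matrix.det_diagonal, Finset.prod_const]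
    exact hu.pow _
  · ext i; simp [Matrix.scalar_apply, Matrix.mulVec_diagonal]

/-- generalized transvection -/
lemma Rel.transvection (v f z : ι → C) (h : IsUnit (1 + f ⬝ᵥ z)) :
    Rel v (v + (f ⬝ᵥ v) • z) := by
  refine ⟨1 + Matrix.replicateCol Unit z * Matrix.replicateRow Unit f, ?_, ?_⟩
  · rw [Matrix.det_one_add_replicateCol_mul_replicateRow]
    exact h
  · ext i
    rw [Matrix.add_mulVec, Matrix.one_mulVec, ← Matrix.mulVec_mulVec, Pi.add_apply, Pi.add_apply]
    congr 1
    simp only [Matrix.mulVec, dotProduct, Matrix.replicateCol_apply, Matrix.replicateRow_apply,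
      Finset.univ_unique, Finset.sum_singleton, Pi.smul_apply, smul_eq_mul]
    ring

lemma Rel.of_isUnit (v : ι → C) (i : ι) (h : IsUnit (v i)) : Rel v (Pi.single i 1) := by
  obtain ⟨u, hu⟩ := h
  have key := Rel.transvection v (Pi.single i 1) ((↑u⁻¹ : C) • (Pi.single i 1 - v)) (by
    simp only [single_dotProduct, one_mul, Pi.smul_apply, Pi.sub_apply, Pi.single_eq_same,
      smul_eq_mul, ← hu]
    have : 1 + (↑u⁻¹ : C) * (1 - ↑u) = ↑u⁻¹ := by
      rw [mul_sub, Units.inv_mul]; ring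
    rw [this]
    exact Units.isUnit _)
  convert key using 1
  simp [single_dotProduct, smul_smul, ← hu]

/-- the matrix computation in the Suslin argument -/
lemma Rel.crux [IsDomain C] {i0 i1 : ι} (hi : i0 ≠ i1) (v δ : ι → C) (c p q π κ : C)
    (hc : c ≠ 0) (h : p * v i0 + q * v i1 = c)
    (h' : (p + c * π) * (v i0 + c * δ i0) + (q + c * κ) * (v i1 + c * δ i1) = c) :
    Rel v (fun i => v i + c * δ i) := by
  let U : Matrix ι (Fin 2) C := Matrix.of fun i j => δ i * ![p, q] j +
    (if i = i0 then ![κ * v i1, -(κ * v i0)] j else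
      if i = i1 then ![-(π * v i1), π * v i0] j else 0)
  let V : Matrix (Fin 2) ι C := Matrix.of ![Pi.single i0 1, Pi.single i1 1]
  have hVv : ∀ w : ι → C, Matrix.mulVec V w = ![w i0, w i1] := by
    intro w
    ext j
    fin_cases j <;> simp [V, Matrix.mulVec]
  have hVU : V * U = Matrix.of ![![U i0 0, U i0 1], ![U i1 0, U i1 1]] := by
    ext i j
    have := congrFun (hVv (fun l => U l j)) i
    change Matrix.mulVec V (fun l => U l j) i = _
    rw [this]
    fin_cases i <;> fin_cases j <;> rfl
  refine ⟨1 + U * V, ?_, ?_⟩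
  · rw [Matrix.det_one_add_mul_comm, hVU]
    have : (1 + Matrix.of ![![U i0 0, U i0 1], ![U i1 0, U i1 1]]).det = 1 := by
      rw [Matrix.det_fin_two]
      simp only [U, Matrix.add_apply, Matrix.of_apply, Matrix.one_apply]
      simp [hi.symm]
      apply mul_left_cancel₀ (mul_ne_zero hc hc)
      subst h
      linear_combination (p * v i0 + q * v i1) * h'
    rw [this]; exact isUnit_one
  · rw [Matrix.add_mulVec, Matrix.one_mulVec, ← Matrix.mulVec_mulVec, hVv]
    ext i
    simp only [Pi.add_apply, Matrix.mulVec, dotProduct, Fin.sum_univ_two, U, Matrix.of_apply]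
    simp
    split_ifs with h1 h2
    all_goals linear_combination δ i * h

end rel

/-- A coprimality statement in a PID. -/
lemma exists_coprime_add {R : Type*} [CommRing R] [IsDomain R] [IsPrincipalIdealRing R]
    (g x h : R) (hg : g ≠ 0) (H : Ideal.span {g, x, h} = ⊤) : ∃ a, IsCoprime g (x + a * h) := by
  classical
  let s := (UniqueFactorizationMonoid.factors g).filter (fun p => ¬ p ∣ x)
  refine ⟨s.prod, ?_⟩
  apply isCoprime_of_prime_dvd
  · exact fun hh => hg hh.1
  intro p hp hpg hpx
  by_cases hx : p ∣ x
  · have h1 : p ∣ s.prod * h := (dvd_add_right hx).1 hpx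
    rcases hp.dvd_or_dvd h1 with h2 | h2
    · obtain ⟨q, hq, hpq⟩ := hp.exists_mem_multiset_dvd h2
      rw [Multiset.mem_filter] at hq
      have hqi := UniqueFactorizationMonoid.irreducible_of_factor q hq.1
      exact absurd (((hp.irreducible.associated_of_dvd hqi hpq).symm.dvd).trans hx) hq.2
    · have : Ideal.span {g, x, h} ≤ Ideal.span {p} := by
        rw [Ideal.span_le]
        rintro y (rfl | rfl | rfl) <;> exact Ideal.mem_span_singleton.2 ‹_›
      rw [H, top_le_iff, Ideal.span_singleton_eq_top] at this
      exact hp.not_isUnit this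
  · obtain ⟨q, hq, hpq⟩ := UniqueFactorizationMonoid.exists_mem_factors_of_dvd hg hp.irreducible hpg
    apply hx
    have h1 : p ∣ s.prod := by
      refine hpq.dvd.trans (Multiset.dvd_prod ?_)
      rw [Multiset.mem_filter]
      exact ⟨hq, fun hh => hx (hpq.dvd.trans hh)⟩
    exact (dvd_add_left (h1.mul_right h)).1 hpx

section suslin
variable {ι : Type*} [Fintype ι] [DecidableEq ι] {A : Type*} [CommRing A]

lemma exists_const_mem (m : Ideal A) [m.IsMaximal] (g x : A[X]) (hg : g.Monic)
    (h : IsCoprime (g.map (Ideal.Quotient.mk m)) (x.map (Ideal.Quotient.mk m))) :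
    ∃ c : A, c ∉ m ∧ ∃ p q : A[X], p * g + q * x = C c := by
  by_contra hcon
  push Not at hcon
  let J : Ideal A[X] := Ideal.span {g, x}
  have hJ : J.comap (algebraMap A A[X]) ≤ m := by
    intro c hc
    by_contra hcm
    obtain ⟨p, q, hpq⟩ := Ideal.mem_span_pair.1 (Ideal.mem_comap.1 hc)
    exact hcon c hcm p q hpq
  have hIntegral : Algebra.IsIntegral A (A[X] ⧸ J) := by
    refine ⟨?_⟩
    have hgJ : g ∈ J := Ideal.subset_span (by simp)
    have := Polynomial.Monic.quotient_isIntegral hg hgJ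
    exact this
  have hker : (⊥ : Ideal (A[X] ⧸ J)).comap (algebraMap A (A[X] ⧸ J)) ≤ m := by
    intro c hc
    apply hJ
    rw [Ideal.mem_comap] at hc ⊢
    rw [Ideal.mem_bot] at hc
    exact Ideal.Quotient.eq_zero_iff_mem.1 hc
  obtain ⟨Q, -, hQ, hQm⟩ := Ideal.exists_ideal_over_prime_of_isIntegral m ⊥ hker
  let Q' := Q.comap (Ideal.Quotient.mk J)
  have hQ' : Q'.IsPrime := Ideal.comap_isPrime _ _
  have hJQ : J ≤ Q' := by
    intro y hy
    rw [Ideal.mem_comap, Ideal.Quotient.eq_zero_iff_mem.2 hy]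
    exact Q.zero_mem
  have hmQ : m.map (C : A →+* A[X]) ≤ Q' := by
    rw [Ideal.map_le_iff_le_comap]
    intro y hy
    rw [← hQm] at hy
    exact hy
  obtain ⟨p, q, hpq⟩ := h
  obtain ⟨p, rfl⟩ := Polynomial.map_surjective _ Ideal.Quotient.mk_surjective p
  obtain ⟨q, rfl⟩ := Polynomial.map_surjective _ Ideal.Quotient.mk_surjective q
  have h1 : p * g + q * x - 1 ∈ m.map (C : A →+* A[X]) := by
    have : p * g + q * x - 1 ∈ RingHom.ker (Polynomial.mapRingHom (Ideal.Quotient.mk m)) := by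
      rw [RingHom.mem_ker]
      simp [hpq]
    rwa [Polynomial.ker_mapRingHom, Ideal.mk_ker] at this
  have h2 : p * g + q * x ∈ Q' := hJQ (Ideal.mem_span_pair.2 ⟨p, q, rfl⟩)
  apply hQ'.ne_top
  rw [Ideal.eq_top_iff_one]
  have := Q'.sub_mem h2 (hmQ h1)
  simpa using this

/-- The ideal of periods of a vector of polynomials. -/
def periodIdeal (v : ι → A[X]) : Ideal A where
  carrier := {c | ∀ b z : A[X], Rel (fun i => (v i).comp b) (fun i => (v i).comp (b + C c * z))}
  add_mem' := by
    intro c d hc hd b z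
    have := (hc b z).trans (hd (b + C c * z) z)
    have e : b + C (c + d) * z = b + C c * z + C d * z := by rw [C_add]; ring
    rw [e]
    exact this
  zero_mem' := by
    intro b z
    simpa using Rel.refl _
  smul_mem' := by
    intro a c hc b z
    have := hc b (C a * z)
    convert this using 4
    simp; ring

theorem suslin [IsDomain A] (v : ι → A[X]) {i0 i1 : ι} (hi : i0 ≠ i1) (hm : (v i0).Monic)
    (hu : Ideal.span (Set.range v) = ⊤) : Rel v (fun i => C ((v i).eval 0)) := by
  have key : periodIdeal v = ⊤ := by
    by_contra hne
    obtain ⟨m, hmax, hle⟩ := Ideal.exists_le_maximal _ hne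
    let φ := Ideal.Quotient.mk m
    let _ : Field (A ⧸ m) := Ideal.Quotient.field m
    let vb : ι → (A ⧸ m)[X] := fun i => if i = i0 ∨ i = i1 then 0 else (v i).map φ
    let J := Ideal.span (Set.range vb)
    obtain ⟨h, hh⟩ := (IsPrincipalIdealRing.principal J).principal
    have hhJ : h ∈ J := by rw [hh]; exact Submodule.mem_span_singleton_self h
    obtain ⟨co, hco⟩ := Ideal.mem_span_range_iff_exists_fun.1 hhJ
    have hspan : Ideal.span {(v i0).map φ, (v i1).map φ, h} = ⊤ := by
      rw [eq_top_iff]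
      have h1 : (⊤ : Ideal (A ⧸ m)[X]) = (Ideal.span (Set.range v)).map (mapRingHom φ) := by
        rw [hu, Ideal.map_top]
      rw [h1, Ideal.map_span, Ideal.span_le]
      rintro _ ⟨_, ⟨i, rfl⟩, rfl⟩
      simp only [coe_mapRingHom, SetLike.mem_coe]
      by_cases h0 : i = i0
      · subst h0; exact Ideal.subset_span (by simp)
      by_cases h1 : i = i1
      · subst h1; exact Ideal.subset_span (by simp)
      have : (v i).map φ ∈ J := Ideal.subset_span ⟨i, by simp [vb, h0, h1]⟩
      rw [hh] at this
      exact Ideal.span_mono (by simp) this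
    obtain ⟨a, ha⟩ := exists_coprime_add _ _ _ (hm.map φ).ne_zero hspan
    choose lift hlift using Polynomial.map_surjective φ Ideal.Quotient.mk_surjective
    let f : ι → A[X] := fun i => if i = i0 ∨ i = i1 then 0 else lift (a * co i)
    let v' := v + (f ⬝ᵥ v) • (Pi.single i1 1 : ι → A[X])
    have hrel : Rel v v' := by
      apply Rel.transvection
      simp [f]
    have hv0 : v' i0 = v i0 := by simp [v', hi]
    have hv1 : (v' i1).map φ = (v i1).map φ + a * h := by
      simp only [v', Pi.add_apply, Pi.smul_apply, Pi.single_eq_same, smul_eq_mul, mul_one,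
        Polynomial.map_add]
      congr 1
      rw [← hco, dotProduct, Polynomial.map_sum, Finset.mul_sum]
      refine Finset.sum_congr rfl fun i _ => ?_
      simp only [f, vb]
      split_ifs
      · simp
      · simp [hlift, mul_assoc]
    obtain ⟨c, hcm, p, q, hpq⟩ := exists_const_mem m (v' i0) (v' i1) (hv0 ▸ hm)
      (by rw [hv1, hv0]; exact ha)
    apply hcm
    apply hle
    intro b z
    have hb : ∀ b : A[X], Rel (fun i => (v i).comp b) (fun i => (v' i).comp b) :=
      fun b => hrel.map (compRingHom b)
    refine (hb b).trans (Rel.trans ?_ (hb _).symm)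
    have hd : ∀ x : A[X], ∃ d, x.comp (b + C c * z) = x.comp b + C c * d := by
      intro x
      have h1 : (b + C c * z) - b ∣ x.comp (b + C c * z) - x.comp b := by
        simp only [Polynomial.comp]
        rw [← Polynomial.eval_map, ← Polynomial.eval_map]
        exact Polynomial.sub_dvd_eval_sub _ _ _
      obtain ⟨d, hd⟩ := h1
      exact ⟨z * d, by linear_combination hd⟩
    choose d hd using hd
    have hpb : ∀ b : A[X], p.comp b * (v' i0).comp b + q.comp b * (v' i1).comp b = C c := by
      intro b
      rw [← mul_comp, ← mul_comp, ← add_comp, hpq, C_comp]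
    have hc0 : (C c : A[X]) ≠ 0 := by
      rw [Ne, C_eq_zero]
      rintro rfl
      exact hcm m.zero_mem
    have := Rel.crux hi (fun i => (v' i).comp b) (fun i => d (v' i)) (C c) (p.comp b) (q.comp b)
      (d p) (d q) hc0 (hpb b) (by simp only [← hd]; exact hpb _)
    simpa only [← hd] using this
  have h1 : (1 : A) ∈ periodIdeal v := by rw [key]; trivial
  have := h1 X (-X)
  simpa [Polynomial.comp_zero] using this

end suslin

end LaurentQS


namespace LaurentQS
universe u v
open Polynomial
open scoped LaurentPolynomial

section lrows
variable {A : Type*} [CommRing A]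

lemma isUnit_root (g : A[X]) (h0 : IsUnit (g.coeff 0)) : IsUnit (AdjoinRoot.root g) := by
  have h1 : AdjoinRoot.root g * AdjoinRoot.mk g g.divX = - AdjoinRoot.of g (g.coeff 0) := by
    have h2 : AdjoinRoot.mk g (X * g.divX + C (g.coeff 0)) = 0 := by
      rw [X_mul_divX_add, AdjoinRoot.mk_self]
    rw [map_add, map_mul, AdjoinRoot.mk_X, AdjoinRoot.mk_C] at h2
    exact eq_neg_of_add_eq_zero_left h2
  have h3 : IsUnit (- AdjoinRoot.of g (g.coeff 0)) := (h0.map (AdjoinRoot.of g)).neg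
  rw [← h1] at h3
  exact isUnit_of_mul_isUnit_left h3

/-- Reduction of Laurent polynomials modulo a doubly monic polynomial. -/
noncomputable def lred (g : A[X]) (h0 : IsUnit (g.coeff 0)) : A[T;T⁻¹] →+* AdjoinRoot g :=
  LaurentPolynomial.eval₂ (AdjoinRoot.of g) (isUnit_root g h0).unit

lemma lred_toLaurent (g : A[X]) (h0 : IsUnit (g.coeff 0)) (p : A[X]) :
    lred g h0 (toLaurent p) = AdjoinRoot.mk g p := by
  rw [lred, LaurentPolynomial.eval₂_toLaurent, IsUnit.unit_spec]
  exact AdjoinRoot.aeval_eq p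

lemma lred_self (g : A[X]) (h0 : IsUnit (g.coeff 0)) : lred g h0 (toLaurent g) = 0 := by
  rw [lred_toLaurent, AdjoinRoot.mk_self]

/-- The reduction as a linear map. -/
noncomputable def lredₗ (g : A[X]) (h0 : IsUnit (g.coeff 0)) : A[T;T⁻¹] →ₗ[A] AdjoinRoot g where
  toFun := lred g h0
  map_add' := map_add _
  map_smul' a b := by
    rw [LaurentPolynomial.smul_eq_C_mul, map_mul, Algebra.smul_def]
    congr 1
    rw [lred, LaurentPolynomial.eval₂_C]
    rfl

lemma lred_section (g : A[X]) (hg : g.Monic) (h0 : IsUnit (g.coeff 0)) (b : A[T;T⁻¹]) :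
    ∃ w, toLaurent (AdjoinRoot.modByMonicHom hg (lred g h0 b)) = b + toLaurent g * w := by
  obtain ⟨N, p, hp⟩ := LaurentPolynomial.exists_T_pow b
  set h := AdjoinRoot.modByMonicHom hg (lred g h0 b) with hh
  have h1 : AdjoinRoot.mk g h = lred g h0 b := AdjoinRoot.mk_leftInverse hg _
  have h2 : AdjoinRoot.mk g (h * X ^ N - p) = 0 := by
    rw [map_sub, map_mul, h1, ← lred_toLaurent g h0, ← lred_toLaurent g h0, hp, map_mul,
      toLaurent_X_pow, sub_self]
  rw [AdjoinRoot.mk_eq_zero] at h2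
  obtain ⟨q, hq⟩ := h2
  have h3 := congrArg toLaurent hq
  rw [map_sub, map_mul, map_mul, hp, toLaurent_X_pow] at h3
  refine ⟨toLaurent q * LaurentPolynomial.T (-N), ?_⟩
  have h4 : (LaurentPolynomial.T (N : ℤ) : A[T;T⁻¹]) * LaurentPolynomial.T (-N : ℤ) = 1 := by
    rw [← LaurentPolynomial.T_add]; simp
  linear_combination (LaurentPolynomial.T (-N : ℤ) : A[T;T⁻¹]) * h3 +
    (b - toLaurent h) * h4

variable {ι : Type*} [Fintype ι] [DecidableEq ι]

theorem laurent_row [IsDomain A] (v : ι → A[T;T⁻¹]) {i0 i1 : ι} (hi : i0 ≠ i1) (g : A[X])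
    (hg : g.Monic) (h0 : IsUnit (g.coeff 0)) (hv : v i0 = toLaurent g)
    (hu : Ideal.span (Set.range v) = ⊤) : Rel v (Pi.single i0 1) := by
  choose w hw using lred_section g hg h0
  let h : ι → A[X] := fun i => if i = i0 then g else AdjoinRoot.modByMonicHom hg (lred g h0 (v i))
  let z : ι → A[T;T⁻¹] := fun i => if i = i0 then 0 else w (v i)
  have hh : ∀ i, toLaurent (h i) = v i + toLaurent g * z i := by
    intro i
    by_cases hi : i = i0
    · subst hi; simp [h, z, hv]
    · simp [h, z, hi, hw]
  have hh0 : h i0 = g := by simp [h]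
  have r1 : Rel v (fun i => toLaurent (h i)) := by
    have := Rel.transvection v (Pi.single i0 1) z (by simp [z])
    convert this using 1
    ext1 i
    rw [hh]
    simp [hv]
  let J := Ideal.span (Set.range h)
  have hgJ : g ∈ J := Ideal.subset_span ⟨i0, hh0⟩
  have hJ : J.map (algebraMap A[X] A[T;T⁻¹]) = ⊤ := by
    rw [eq_top_iff, ← hu, Ideal.span_le]
    rintro _ ⟨i, rfl⟩
    have h1 : v i = toLaurent (h i) - toLaurent g * z i := by rw [hh]; ring
    rw [SetLike.mem_coe, h1]
    refine Ideal.sub_mem _ ?_ (Ideal.mul_mem_right _ _ ?_)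
    · exact Ideal.mem_map_of_mem (algebraMap A[X] A[T;T⁻¹]) (Ideal.subset_span ⟨i, rfl⟩)
    · exact Ideal.mem_map_of_mem (algebraMap A[X] A[T;T⁻¹]) hgJ
  have hJ' : ∃ N, X ^ N ∈ J := by
    have h1 : (1 : A[T;T⁻¹]) ∈ J.map (algebraMap A[X] A[T;T⁻¹]) := by rw [hJ]; trivial
    rw [IsLocalization.mem_map_algebraMap_iff (Submonoid.powers (X : A[X]))] at h1
    obtain ⟨⟨a, ⟨_, N, rfl⟩⟩, h2⟩ := h1
    refine ⟨N, ?_⟩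
    rw [one_mul] at h2
    have := toLaurent_injective h2
    simp only at this
    rw [this]
    exact a.2
  obtain ⟨N, hN⟩ := hJ'
  have hcop : IsCoprime g X := by
    obtain ⟨y, hy⟩ := h0.exists_left_inv
    refine ⟨C y, - C y * g.divX, ?_⟩
    have h1 := X_mul_divX_add g
    have h2 : C y * C (g.coeff 0) = (1 : A[X]) := by rw [← C_mul, hy, C_1]
    linear_combination h2 - C y * h1
  have huh : Ideal.span (Set.range h) = ⊤ := by
    obtain ⟨a, b, hab⟩ := hcop.pow_right (n := N)
    rw [Ideal.eq_top_iff_one, ← hab]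
    exact J.add_mem (J.mul_mem_left _ hgJ) (J.mul_mem_left _ hN)
  have r2 := (suslin h hi (hh0 ▸ hg) huh).map toLaurent
  refine r1.trans (r2.trans (Rel.of_isUnit _ i0 ?_))
  rw [hh0, ← coeff_zero_eq_eval_zero]
  exact (h0.map C).map toLaurent

lemma normalize_laurent (b : A[T;T⁻¹]) (hb : b ≠ 0) (hc : ∀ n, b.coeff n = 0 ∨ IsUnit (b.coeff n)) :
    ∃ (u : A[T;T⁻¹]) (g : A[X]), IsUnit u ∧ g.Monic ∧ IsUnit (g.coeff 0) ∧ u * b = toLaurent g := by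
  obtain ⟨N, p, hp⟩ := LaurentPolynomial.exists_T_pow b
  have hp0 : p ≠ 0 := by
    rintro rfl
    rw [map_zero] at hp
    exact hb (((LaurentPolynomial.isUnit_T (R := A) N).mul_left_eq_zero).1 hp.symm)
  have hpc : ∀ n, p.coeff n = 0 ∨ IsUnit (p.coeff n) := by
    intro n
    have h1 : (toLaurent p).coeff (n : ℤ) = p.coeff n := by
      rw [LaurentPolynomial.coeff_toLaurent]
      exact Finsupp.mapDomain_apply Nat.castEmbedding.injective _ n
    have h2 : (b * LaurentPolynomial.T N).coeff (n : ℤ) = b.coeff (n - N) := by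
      have h3 := AddMonoidAlgebra.coeff_mul_single_apply b (1 : A) (N : ℤ) (n : ℤ)
      rw [mul_one] at h3
      exact h3
    rw [← h1, hp, h2]
    exact hc _
  obtain ⟨q, hq⟩ : X ^ p.natTrailingDegree ∣ p :=
    X_pow_dvd_iff.2 fun d hd => coeff_eq_zero_of_lt_natTrailingDegree hd
  have hqc : ∀ n, q.coeff n = p.coeff (n + p.natTrailingDegree) := by
    intro n
    have h1 := coeff_X_pow_mul q p.natTrailingDegree n
    rw [← hq] at h1
    exact h1.symm
  have hq0 : IsUnit (q.coeff 0) := by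
    rw [hqc, zero_add]
    exact (hpc _).resolve_left (trailingCoeff_nonzero_iff_nonzero.2 hp0)
  have hq1 : q ≠ 0 := by
    rintro rfl
    exact hp0 (by simpa using hq)
  have hql : IsUnit q.leadingCoeff := by
    have : q.leadingCoeff ≠ 0 := leadingCoeff_ne_zero.2 hq1
    rw [leadingCoeff, hqc] at this ⊢
    exact (hpc _).resolve_left this
  obtain ⟨l, hl⟩ := hql.exists_left_inv
  have hlu : IsUnit l := isUnit_iff_exists_inv.2 ⟨_, hl⟩
  refine ⟨toLaurent (C l) * LaurentPolynomial.T N *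
    LaurentPolynomial.T (-p.natTrailingDegree), C l * q, ?_, ?_, ?_, ?_⟩
  · exact (((hlu.map C).map toLaurent).mul (LaurentPolynomial.isUnit_T _)).mul
      (LaurentPolynomial.isUnit_T _)
  · exact monic_C_mul_of_mul_leadingCoeff_eq_one hl
  · rw [coeff_C_mul]; exact hlu.mul hq0
  · have h3 := congrArg toLaurent hq
    rw [hp, map_mul, toLaurent_X_pow] at h3
    have h4 : (LaurentPolynomial.T (p.natTrailingDegree : ℤ) : A[T;T⁻¹]) *
        LaurentPolynomial.T (-p.natTrailingDegree : ℤ) = 1 := by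
      rw [← LaurentPolynomial.T_add]; simp
    rw [map_mul]
    linear_combination (toLaurent (C l) * LaurentPolynomial.T (-p.natTrailingDegree : ℤ)) * h3 +
      toLaurent (C l) * toLaurent q * h4

theorem laurent_row' [IsDomain A] (v : ι → A[T;T⁻¹]) (i0 : ι)
    (hb : v i0 ≠ 0) (hc : ∀ n, (v i0).coeff n = 0 ∨ IsUnit ((v i0).coeff n))
    (hu : Ideal.span (Set.range v) = ⊤) : Rel v (Pi.single i0 1) := by
  by_cases hi : ∃ i1, i0 ≠ i1
  · obtain ⟨i1, hi⟩ := hi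
    obtain ⟨u, g, hu1, hg, h0, hug⟩ := normalize_laurent _ hb hc
    refine (Rel.smul_left v hu1).trans (laurent_row _ hi g hg h0 (by simpa using hug) ?_)
    rw [eq_top_iff, ← hu, Ideal.span_le]
    rintro _ ⟨i, rfl⟩
    obtain ⟨y, hy⟩ := hu1.exists_left_inv
    have : v i = y * (u • v) i := by
      simp [← mul_assoc, hy]
    rw [this]
    exact Ideal.mul_mem_left _ _ (Ideal.subset_span ⟨i, rfl⟩)
  · push Not at hi
    apply Rel.of_isUnit
    rw [← Ideal.span_singleton_eq_top, ← hu]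
    congr 1
    ext x
    constructor
    · rintro rfl; exact ⟨i0, rfl⟩
    · rintro ⟨i, rfl⟩; rw [← hi i]; rfl

end lrows
end LaurentQS


namespace LaurentQS
universe u v w
open Polynomial
open scoped LaurentPolynomial

/-- All finitely generated projective modules (in the universe of the ring) are free. -/
def PF (R : Type u) [CommRing R] : Prop :=
  ∀ (P : Type u) [AddCommGroup P] [Module R P] [Module.Finite R P] [Module.Projective R P],
    Module.Free R P

lemma PF.any {R : Type u} [CommRing R] (h : PF R) (P : Type v) [AddCommGroup P] [Module R P]
    [Module.Finite R P] [Module.Projective R P] : Module.Free R P := by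
  obtain ⟨n, f, hf⟩ := Module.Finite.exists_fin' R P
  obtain ⟨s, hs⟩ := Module.projective_lifting_property f LinearMap.id hf
  have hinj : Function.Injective s := by
    intro x y hxy
    have := congrArg f hxy
    rwa [← LinearMap.comp_apply, ← LinearMap.comp_apply, hs] at this
  let e := LinearEquiv.ofInjective s hinj
  have h1 : Module.Finite R (LinearMap.range s) := Module.Finite.equiv e
  have h2 : Module.Projective R (LinearMap.range s) := Module.Projective.of_equiv e
  have h3 := h (LinearMap.range s)
  exact Module.Free.of_equiv e.symm

lemma PF.ringEquiv {R : Type u} {S : Type v} [CommRing R] [CommRing S] (e : R ≃+* S) (h : PF R) :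
    PF S := by
  intro P _ _ _ _
  let _ : Module R P := Module.compHom P e.toRingHom
  have hsm : ∀ (r : R) (x : P), r • x = e r • x := fun _ _ => rfl
  have := RingHomInvPair.of_ringEquiv e
  have := RingHomInvPair.of_ringEquiv_symm e
  let e₂ : P ≃ₛₗ[(e : R →+* S)] P :=
    { AddEquiv.refl P with map_smul' := fun r x => hsm r x }
  have h1 : Module.Finite R P := by
    constructor
    obtain ⟨n, s, hs⟩ := Submodule.fg_iff_exists_fin_generating_family.1 (Module.Finite.fg_top (R := S) (M := P))
    refine Submodule.fg_iff_exists_fin_generating_family.2 ⟨n, s, ?_⟩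
    rw [eq_top_iff]
    rintro x -
    have hx : x ∈ Submodule.span S (Set.range s) := by rw [hs]; trivial
    induction hx using Submodule.span_induction with
    | mem x h => exact Submodule.subset_span h
    | zero => exact Submodule.zero_mem _
    | add x y _ _ hx hy => exact Submodule.add_mem _ hx hy
    | smul a x _ hx =>
      have := Submodule.smul_mem _ (e.symm a) hx
      rwa [hsm, e.apply_symm_apply] at this
  have h2 : Module.Projective R P := Module.Projective.of_equiv e₂.symm
  have h3 := h.any P
  exact Module.Free.of_equiv e₂

/-- Unimodular vectors are equivalent to basis vectors. -/
def RowsOK (B : Type u) [CommRing B] : Prop :=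
  ∀ (n : ℕ) (v : Fin n → B), Ideal.span (Set.range v) = ⊤ → ∃ i, Rel v (Pi.single i 1)

lemma RowsOK.cancel {B : Type u} [CommRing B] (h : RowsOK B) (P : Type v) [AddCommGroup P]
    [Module B P] [Module.Finite B (P × B)] [Module.Free B (P × B)] : Module.Free B P := by
  obtain ⟨n, ⟨e⟩⟩ : ∃ n, Nonempty ((P × B) ≃ₗ[B] (Fin n → B)) :=
    ⟨_, ⟨((Module.Free.chooseBasis B (P × B)).reindex (Fintype.equivFin _)).equivFun⟩⟩
  have huni : Ideal.span (Set.range (e (0, 1))) = ⊤ := by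
    rw [Ideal.eq_top_iff_one, Ideal.mem_span_range_iff_exists_fun]
    let φ : (Fin n → B) →ₗ[B] B := (LinearMap.snd B P B).comp e.symm.toLinearMap
    have h1 : φ (e (0, 1)) = 1 := by simp [φ]
    refine ⟨fun i => φ (Pi.single i 1), ?_⟩
    rw [LinearMap.pi_apply_eq_sum_univ φ] at h1
    refine Eq.trans (Finset.sum_congr rfl fun i _ => ?_) h1
    have h2 : (Pi.single i (1 : B) : Fin n → B) = fun j => if i = j then 1 else 0 := by
      ext j
      simp [Pi.single_apply, eq_comm]
    rw [smul_eq_mul, mul_comm, ← h2]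
  obtain ⟨i, M, hM, hMv⟩ := h n (e (0, 1)) huni
  have hMu : IsUnit M := (Matrix.isUnit_iff_isUnit_det M).2 hM
  let e2 : (P × B) ≃ₗ[B] (Fin n → B) := e.trans (Matrix.toLinearEquiv' M hMu.invertible)
  have he2 : e2 (0, 1) = Pi.single i 1 := by
    rw [← hMv]; rfl
  have he3 : ∀ c : B, e2 (0, c) = Pi.single i c := by
    intro c
    have : ((0, c) : P × B) = c • (0, 1) := by simp
    rw [this, map_smul, he2]
    ext j
    simp [Pi.single_apply]
  let f : P →ₗ[B] ({j // j ≠ i} → B) :=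
    (LinearMap.funLeft B B (Subtype.val : {j // j ≠ i} → Fin n)).comp
      (e2.toLinearMap.comp (LinearMap.inl B P B))
  have hf : Function.Bijective f := by
    constructor
    · rw [injective_iff_map_eq_zero]
      intro p hp
      have h1 : e2 (p, 0) = e2 (0, e2 (p, 0) i) := by
        rw [he3]
        ext j
        by_cases hj : j = i
        · subst hj; simp
        · have := congrFun hp ⟨j, hj⟩
          rw [Pi.single_eq_of_ne hj]
          exact this
      have h2 := e2.injective h1
      exact congrArg Prod.fst h2
    · intro w
      obtain ⟨⟨p, c⟩, hpc⟩ := e2.surjective (fun j => if hj : j = i then 0 else w ⟨j, hj⟩)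
      refine ⟨p, ?_⟩
      ext ⟨j, hj⟩
      have h1 : e2 (p, c) = e2 (p, 0) + e2 (0, c) := by rw [← map_add]; simp
      have h2 := congrFun hpc j
      rw [h1, he3, Pi.add_apply, Pi.single_eq_of_ne hj, add_zero, dif_neg hj] at h2
      exact h2
  exact Module.Free.of_equiv (LinearEquiv.ofBijective f hf).symm

lemma RowsOK.cancel_pow {B : Type u} [CommRing B] (h : RowsOK B) (P : Type v) [AddCommGroup P]
    [Module B P] [Module.Finite B P] (s : ℕ) (hfree : Module.Free B (P × (Fin s → B))) :
    Module.Free B P := by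
  induction s with
  | zero =>
    exact Module.Free.of_equiv (LinearEquiv.prodUnique : (P × (Fin 0 → B)) ≃ₗ[B] P)
  | succ s ih =>
    apply ih
    let e : (P × (Fin (s + 1) → B)) ≃ₗ[B] ((P × (Fin s → B)) × B) :=
      (LinearEquiv.prodCongr (LinearEquiv.refl B P)
        ((Fin.consLinearEquiv B (fun _ : Fin (s+1) => B)).symm.trans (LinearEquiv.prodComm B _ _))).trans
        (LinearEquiv.prodAssoc B P (Fin s → B) B).symm
    have := Module.Free.of_equiv e
    exact h.cancel _

end LaurentQS


namespace LaurentQS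
universe u v w
open Polynomial
open scoped LaurentPolynomial

section stably
variable {A : Type u} [CommRing A] {P : Type v} [AddCommGroup P] [Module A[T;T⁻¹] P]

lemma C_smul [Module A P] [IsScalarTower A A[T;T⁻¹] P] (a : A) (x : P) :
    (LaurentPolynomial.C a : A[T;T⁻¹]) • x = a • x := by
  rw [← mul_one (LaurentPolynomial.C a), ← LaurentPolynomial.smul_eq_C_mul, smul_assoc, one_smul]

lemma common_pow {s : ℕ} (z : Fin s → A[T;T⁻¹]) :
    ∃ (N : ℕ) (p : Fin s → A[X]), ∀ i, toLaurent (p i) = LaurentPolynomial.T (N : ℤ) * z i := by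
  choose n p hp using fun i => LaurentPolynomial.exists_T_pow (z i)
  refine ⟨∑ i, n i, fun i => p i * X ^ (∑ i, n i - n i), fun i => ?_⟩
  have h1 : n i ≤ ∑ i, n i := Finset.single_le_sum (fun _ _ => Nat.zero_le _) (Finset.mem_univ i)
  rw [map_mul, hp, toLaurent_X_pow, mul_assoc, ← LaurentPolynomial.T_add, mul_comm]
  congr 2
  push_cast [h1]
  ring

theorem stably_of_basis [IsDomain A] [Module A P] [IsScalarTower A A[T;T⁻¹] P]
    [Module.Projective A[T;T⁻¹] P] {r s : ℕ} (j : (Fin r → A[T;T⁻¹]) →ₗ[A[T;T⁻¹]] P)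
    (hj : Function.Injective j) (w : Fin s → P)
    (hex : ∀ x, ∃ (a : Fin s → A) (y : Fin r → A[T;T⁻¹]), x = ∑ i, a i • w i + j y)
    (huq : ∀ (a : Fin s → A) (y : Fin r → A[T;T⁻¹]), ∑ i, a i • w i + j y = 0 → a = 0) :
    Module.Free A[T;T⁻¹] (P × (Fin s → A[T;T⁻¹])) := by
  choose τ y hy using fun i => hex ((LaurentPolynomial.T 1 : A[T;T⁻¹]) • w i)
  let Ψ : ((Fin s → A[T;T⁻¹]) × (Fin r → A[T;T⁻¹])) →ₗ[A[T;T⁻¹]] P :=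
    LinearMap.coprod (Fintype.linearCombination A[T;T⁻¹] w) j
  have hΨ : ∀ z1 z2, Ψ (z1, z2) = ∑ i, z1 i • w i + j z2 := by
    intro z1 z2
    simp [Ψ, Fintype.linearCombination_apply]
  have hΨC : ∀ (a : Fin s → A) z2,
      Ψ (fun i => LaurentPolynomial.C (a i), z2) = ∑ i, a i • w i + j z2 := by
    intro a z2
    rw [hΨ]
    simp only [C_smul]
  let q : Fin s → (Fin s → A[T;T⁻¹]) × (Fin r → A[T;T⁻¹]) := fun i =>
    ((LaurentPolynomial.T 1 : A[T;T⁻¹]) • Pi.single i 1 - fun l => LaurentPolynomial.C (τ i l), - y i)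
  have hΨq : ∀ i, Ψ (q i) = 0 := by
    intro i
    have h1 : q i = (LaurentPolynomial.T 1 : A[T;T⁻¹]) • (Pi.single i 1, 0) -
        ((fun l => LaurentPolynomial.C (τ i l)), y i) := by
      simp [q]
    rw [h1, map_sub, map_smul, hΨC, ← hy, hΨ]
    simp [Pi.single_apply]
  let θ : (Fin s → A[T;T⁻¹]) →ₗ[A[T;T⁻¹]] ((Fin s → A[T;T⁻¹]) × (Fin r → A[T;T⁻¹])) :=
    Fintype.linearCombination A[T;T⁻¹] q
  have hθ : ∀ u, θ u = ∑ i, u i • q i := fun u => Fintype.linearCombination_apply _ _ _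
  have hΨθ : ∀ u, Ψ (θ u) = 0 := by
    intro u
    rw [hθ, map_sum]
    simp [hΨq]
  have hθinj : ∀ u, θ u = 0 → u = 0 := by
    intro u hu
    let M : Matrix (Fin s) (Fin s) A[T;T⁻¹] :=
      (toLaurent (R := A)).mapMatrix (Matrix.charmatrix (Matrix.of fun l i => τ i l))
    have hM : M.det ≠ 0 := by
      rw [← RingHom.map_det]
      exact (map_ne_zero_iff _ toLaurent_injective).2 (Matrix.charpoly_monic _).ne_zero
    refine Matrix.eq_zero_of_mulVec_eq_zero hM ?_
    ext1 l
    have h1 := congrFun (congrArg Prod.fst hu) l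
    rw [hθ] at h1
    simp only [Prod.fst_sum, Finset.sum_apply] at h1
    refine Eq.trans ?_ h1
    rw [Matrix.mulVec, dotProduct]
    refine Finset.sum_congr rfl fun i _ => ?_
    simp only [q, M, Prod.smul_mk, Pi.smul_apply, Pi.sub_apply, smul_eq_mul, RingHom.mapMatrix_apply,
      Matrix.map_apply, Matrix.charmatrix_apply, Matrix.of_apply, map_sub, toLaurent_C,
      Matrix.diagonal_apply, Pi.single_apply]
    split_ifs with h
    · rw [toLaurent_X]; ring
    · rw [map_zero]; ring
  let Good : (Fin s → A[T;T⁻¹]) × (Fin r → A[T;T⁻¹]) → Prop := fun z =>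
    ∃ (a : Fin s → A) (y' : Fin r → A[T;T⁻¹]) (u : Fin s → A[T;T⁻¹]),
      z = (fun i => LaurentPolynomial.C (a i), y') + θ u
  have Gadd : ∀ z z', Good z → Good z' → Good (z + z') := by
    rintro _ _ ⟨a, y, u, rfl⟩ ⟨a', y', u', rfl⟩
    refine ⟨a + a', y + y', u + u', ?_⟩
    have : (fun i => LaurentPolynomial.C ((a + a') i) : Fin s → A[T;T⁻¹]) =
      (fun i => LaurentPolynomial.C (a i)) + fun i => LaurentPolynomial.C (a' i) := by
      ext1 i; simp
    rw [this, map_add, ← Prod.mk_add_mk]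
    abel
  have G0 : Good 0 := ⟨0, 0, 0, by rw [map_zero]; ext1 <;> simp; rfl⟩
  have GT : ∀ z, Good z → Good ((LaurentPolynomial.T 1 : A[T;T⁻¹]) • z) := by
    rintro _ ⟨a, y', u, rfl⟩
    refine ⟨fun l => ∑ i, a i * τ i l, (LaurentPolynomial.T 1 : A[T;T⁻¹]) • y' +
      ∑ i, LaurentPolynomial.C (a i) • y i,
      (fun i => LaurentPolynomial.C (a i)) + (LaurentPolynomial.T 1 : A[T;T⁻¹]) • u, ?_⟩
    rw [smul_add, map_add, map_smul, ← add_assoc]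
    congr 1
    rw [hθ]
    ext1
    · simp only [Prod.smul_fst, Prod.fst_add, Prod.fst_sum]
      ext1 l
      simp only [q, Pi.add_apply, Finset.sum_apply, Pi.smul_apply, Pi.sub_apply, smul_eq_mul,
        mul_sub, Finset.sum_sub_distrib, map_sum, map_mul, Pi.single_apply]
      simp
    · simp [q, Prod.snd_sum]
  have Gmon : ∀ (i : Fin s) (p : A[X]), Good (Pi.single i (toLaurent p), 0) := by
    intro i p
    induction p using Polynomial.induction_on' with
    | add p p' h h' =>
      have := Gadd _ _ h h'
      rwa [Prod.mk_add_mk, add_zero, ← Pi.single_add, ← map_add] at this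
    | monomial n a =>
      induction n with
      | zero =>
        refine ⟨Pi.single i a, 0, 0, ?_⟩
        rw [map_zero, add_zero, monomial_zero_left, toLaurent_C]
        congr 1
        ext1 l
        by_cases hl : l = i
        · subst hl; simp
        · simp [hl]
      | succ n ih =>
        have := GT _ ih
        rw [Prod.smul_mk, smul_zero, ← Pi.single_smul, smul_eq_mul, ← toLaurent_X, ← map_mul,
          X_mul_monomial] at this
        exact this
  have Gpoly : ∀ (p : Fin s → A[X]) z2, Good (fun i => toLaurent (p i), z2) := by
    intro p z2
    have h1 : Good (∑ i, (Pi.single i (toLaurent (p i)), 0)) :=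
      Finset.sum_induction _ Good Gadd G0 fun i _ => Gmon i (p i)
    have h2 : Good (0, z2) := ⟨0, z2, 0, by rw [map_zero]; ext1 <;> simp; rfl⟩
    have h3 := Gadd _ _ h1 h2
    convert h3 using 1
    ext1
    · simp [Prod.fst_sum, Finset.univ_sum_single (fun i => toLaurent (p i))]
    · simp [Prod.snd_sum]
  have hker : ∀ z, Ψ z = 0 → ∃ u, θ u = z := by
    rintro ⟨z1, z2⟩ hz
    obtain ⟨N, p, hp⟩ := common_pow z1
    have h1 := Gpoly p ((LaurentPolynomial.T (N : ℤ) : A[T;T⁻¹]) • z2)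
    have h2 : ((fun i => toLaurent (p i)), (LaurentPolynomial.T (N : ℤ) : A[T;T⁻¹]) • z2) =
        (LaurentPolynomial.T (N : ℤ) : A[T;T⁻¹]) • (z1, z2) := by
      ext1
      · ext1 i; exact hp i
      · rfl
    rw [h2] at h1
    obtain ⟨a, y', u, hau⟩ := h1
    have h3 := congrArg Ψ hau
    rw [map_smul, hz, smul_zero, map_add, hΨθ, add_zero, hΨC] at h3
    have ha := huq _ _ h3.symm
    subst ha
    have hy' : y' = 0 := by
      apply hj
      rw [map_zero]
      simpa using h3.symm
    subst hy'
    refine ⟨(LaurentPolynomial.T (-N : ℤ) : A[T;T⁻¹]) • u, ?_⟩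
    have h4 : θ u = (LaurentPolynomial.T (N : ℤ) : A[T;T⁻¹]) • (z1, z2) := by
      rw [hau]
      symm
      convert zero_add (θ u)
      ext1 <;> simp
      rfl
    rw [map_smul, h4, smul_smul, ← LaurentPolynomial.T_add]
    simp
  have hsurj : Function.Surjective Ψ := by
    intro x
    obtain ⟨a, y, h⟩ := hex x
    exact ⟨(fun i => LaurentPolynomial.C (a i), y), by rw [hΨC, ← h]⟩
  obtain ⟨sec, hsec⟩ := Module.projective_lifting_property Ψ LinearMap.id hsurj
  have hsec' : ∀ x, Ψ (sec x) = x := fun x => LinearMap.congr_fun hsec x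
  let F : (P × (Fin s → A[T;T⁻¹])) →ₗ[A[T;T⁻¹]] _ := LinearMap.coprod sec θ
  have hF : Function.Bijective F := by
    constructor
    · rw [injective_iff_map_eq_zero]
      rintro ⟨x, u⟩ h
      have h1 : sec x + θ u = 0 := h
      have h2 := congrArg Ψ h1
      rw [map_add, hsec', hΨθ, add_zero, map_zero] at h2
      subst h2
      rw [map_zero, zero_add] at h1
      rw [hθinj _ h1]
      rfl
    · intro z
      obtain ⟨u, hu⟩ := hker (z - sec (Ψ z)) (by rw [map_sub, hsec', sub_self])
      refine ⟨(Ψ z, u), ?_⟩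
      change sec (Ψ z) + θ u = z
      rw [hu]; abel
  exact Module.Free.of_equiv (LinearEquiv.ofBijective F hF).symm

theorem stably_free [IsDomain A] [IsNoetherianRing A] (hA : PF A)
    [Module.Finite A[T;T⁻¹] P] [Module.Projective A[T;T⁻¹] P] {r : ℕ}
    (j : (Fin r → A[T;T⁻¹]) →ₗ[A[T;T⁻¹]] P) (hj : Function.Injective j)
    (g : A[X]) (hg : g.Monic) (h0 : IsUnit (g.coeff 0))
    (hgj : ∀ x : P, ∃ y, toLaurent g • x = j y) :
    ∃ s, Module.Free A[T;T⁻¹] (P × (Fin s → A[T;T⁻¹])) := by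
  let _ : Module A P := Module.compHom P (algebraMap A A[T;T⁻¹])
  have : IsScalarTower A A[T;T⁻¹] P := IsScalarTower.of_algebraMap_smul fun _ _ => rfl
  have hPA : Module.Projective A P := by
    obtain ⟨m, f, hf⟩ := Module.Finite.exists_fin' A[T;T⁻¹] P
    obtain ⟨sc, hsc⟩ := Module.projective_lifting_property f LinearMap.id hf
    refine Module.Projective.of_split (M := Fin m → A[T;T⁻¹]) (sc.restrictScalars A) (f.restrictScalars A) ?_
    ext x
    exact LinearMap.congr_fun hsc x
  have hG0 : (toLaurent g : A[T;T⁻¹]) ≠ 0 :=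
    (map_ne_zero_iff _ toLaurent_injective).2 hg.ne_zero
  have hGinj : ∀ x x' : P, (toLaurent g : A[T;T⁻¹]) • x = (toLaurent g : A[T;T⁻¹]) • x' → x = x' :=
    fun x x' h => smul_right_injective P hG0 h
  choose y hy using hgj
  choose w hw using lred_section g hg h0
  have yadd : ∀ x x', y (x + x') = y x + y x' := by
    intro x x'; apply hj; rw [map_add, ← hy, ← hy, ← hy, smul_add]
  have ysmul : ∀ (a : A) x, y (a • x) = a • y x := by
    intro a x; apply hj
    rw [← hy, ← algebraMap_smul A[T;T⁻¹] a x, ← algebraMap_smul A[T;T⁻¹] a (y x), map_smul, ← hy,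
      smul_comm]
  let π : P →ₗ[A] (Fin r → AdjoinRoot g) :=
    { toFun := fun x i => lredₗ g h0 (y x i)
      map_add' := fun x x' => by ext1 i; simp [yadd]
      map_smul' := fun a x => by ext1 i; simp [ysmul] }
  have hπ : ∀ x i, π x i = lred g h0 (y x i) := fun _ _ => rfl
  have hyj : ∀ z, y (j z) = (toLaurent g : A[T;T⁻¹]) • z := by
    intro z; apply hj; rw [← hy, map_smul]
  have hπj : ∀ z, π (j z) = 0 := by
    intro z; ext1 i
    rw [hπ, hyj, Pi.smul_apply, smul_eq_mul, map_mul, lred_self, zero_mul]; rfl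
  have hπker : ∀ x, π x = 0 → ∃ z, x = j z := by
    intro x hx
    refine ⟨fun i => - w (y x i), hGinj _ _ ?_⟩
    rw [hy, ← map_smul]
    congr 1
    ext1 i
    have h1 := hw (y x i)
    have h2 : lred g h0 (y x i) = 0 := congrFun hx i
    rw [h2, map_zero, map_zero] at h1
    rw [Pi.smul_apply, smul_eq_mul]
    linear_combination -h1
  let lift : (Fin r → AdjoinRoot g) →ₗ[A] (Fin r → A[T;T⁻¹]) :=
    LinearMap.pi fun i => (toLaurentAlg (R := A)).toLinearMap ∘ₗ (AdjoinRoot.modByMonicHom hg) ∘ₗ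
      LinearMap.proj i
  have hlift : ∀ ω i, lift ω i = toLaurent (AdjoinRoot.modByMonicHom hg (ω i)) := fun _ _ => rfl
  have hlred : ∀ ω i, lred g h0 (lift ω i) = ω i := by
    intro ω i
    rw [hlift, lred_toLaurent]
    exact AdjoinRoot.mk_leftInverse hg _
  have hσ : ∀ ω : LinearMap.range π, ∃ x, (toLaurent g : A[T;T⁻¹]) • x = j (lift ω) := by
    rintro ⟨_, x, rfl⟩
    refine ⟨x + j (fun i => w (y x i)), ?_⟩
    rw [smul_add, hy, ← map_smul, ← map_add]
    congr 1
    ext1 i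
    exact (hw (y x i)).symm
  choose σ hσ using hσ
  let σₗ : LinearMap.range π →ₗ[A] P :=
    { toFun := σ
      map_add' := fun x x' => hGinj _ _ (by
        rw [hσ, smul_add, hσ, hσ, Submodule.coe_add, map_add, map_add])
      map_smul' := fun a x => hGinj _ _ (by
        rw [hσ, RingHom.id_apply, Submodule.coe_smul, map_smul, ← algebraMap_smul A[T;T⁻¹] a (σ x),
          ← algebraMap_smul A[T;T⁻¹] a (lift x), map_smul, ← hσ, smul_comm]) }
  have hπσ : ∀ ω, π (σₗ ω) = ω := by
    intro ω
    have h1 : y (σ ω) = lift ω := by apply hj; rw [← hy, hσ]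
    ext1 i
    change lred g h0 (y (σ ω) i) = _
    rw [h1, hlred]
  have hWp : Module.Projective A (LinearMap.range π) :=
    Module.Projective.of_split σₗ π.rangeRestrict (by
      ext1 ω; exact Subtype.ext (hπσ ω))
  have : Module.Finite A (AdjoinRoot g) := hg.finite_adjoinRoot
  have hWf : Module.Finite A (LinearMap.range π) := inferInstance
  have hWfree := hA.any (LinearMap.range π)
  obtain ⟨s, ⟨b⟩⟩ : ∃ s, Nonempty (Module.Basis (Fin s) A (LinearMap.range π)) :=
    ⟨_, ⟨(Module.Free.chooseBasis A (LinearMap.range π)).reindex (Fintype.equivFin _)⟩⟩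
  refine ⟨s, stably_of_basis j hj (fun i => σₗ (b i)) ?_ ?_⟩
  · intro x
    obtain ⟨z, hz⟩ := hπker (x - σₗ (π.rangeRestrict x)) (by
      rw [map_sub, hπσ]; simp)
    refine ⟨fun i => b.repr (π.rangeRestrict x) i, z, ?_⟩
    rw [← hz]
    have h1 := congrArg σₗ (b.sum_repr (π.rangeRestrict x))
    rw [map_sum] at h1
    simp only [map_smul] at h1
    rw [h1]; abel
  · intro a z h
    have h1 := congrArg π h
    rw [map_add, hπj, add_zero, map_zero, map_sum] at h1
    simp only [map_smul, hπσ] at h1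
    have h2 : ∑ i, a i • b i = 0 := by
      apply Subtype.ext
      simpa using h1
    ext1 i
    exact Fintype.linearIndependent_iff.1 b.linearIndependent a h2 i

end stably
end LaurentQS


namespace LaurentQS
universe u v w
open Polynomial
open scoped LaurentPolynomial

section clear

theorem clear_denominators {B : Type u} [CommRing B] [IsDomain B] (S : Submonoid B)
    (hS0 : (0 : B) ∉ S) {L : Type w} [CommRing L] [Algebra B L] [IsLocalization S L] (hL : PF L)
    (P : Type v) [AddCommGroup P] [Module B P] [Module.Finite B P] [Module.Projective B P] :
    ∃ (r : ℕ) (j : (Fin r → B) →ₗ[B] P) (f : B), Function.Injective j ∧ f ∈ S ∧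
      ∀ x, ∃ y, f • x = j y := by
  have hL' : PF (Localization S) :=
    hL.ringEquiv (IsLocalization.algEquiv S L (Localization S)).toRingEquiv
  have hS1 : ∀ s : S, (s : B) ≠ 0 := fun s h => hS0 (h ▸ s.2)
  have hSle : S ≤ nonZeroDivisors B := fun s hs => mem_nonZeroDivisors_of_ne_zero (hS1 ⟨s, hs⟩)
  let mk := LocalizedModule.mkLinearMap S P
  have h1 : Module.Finite (Localization S) (LocalizedModule S P) :=
    Module.Finite.of_isLocalizedModule S mk
  have h2 : Module.Projective (Localization S) (LocalizedModule S P) :=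
    Module.projective_of_isLocalizedModule S mk
  have h3 := hL'.any (LocalizedModule S P)
  have : Nontrivial (Localization S) :=
    (IsLocalization.injective (Localization S) hSle).nontrivial
  obtain ⟨r, ⟨b⟩⟩ : ∃ s, Nonempty (Module.Basis (Fin s) (Localization S) (LocalizedModule S P)) :=
    ⟨_, ⟨(Module.Free.chooseBasis (Localization S) (LocalizedModule S P)).reindex
      (Fintype.equivFin _)⟩⟩
  have hb : ∀ i, ∃ (p : P) (s : S), (s : B) • b i = mk p := by
    intro i
    obtain ⟨⟨p, s⟩, h⟩ := IsLocalizedModule.surj S mk (b i)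
    exact ⟨p, s, h⟩
  choose p s hps using hb
  let j : (Fin r → B) →ₗ[B] P := Fintype.linearCombination B p
  have hj : ∀ y, mk (j y) = ∑ i, (y i * s i) • b i := by
    intro y
    simp only [j, Fintype.linearCombination_apply, map_sum, map_smul, ← hps, smul_smul]
  have hjinj : Function.Injective j := by
    rw [injective_iff_map_eq_zero]
    intro y hy
    have h4 := hj y
    rw [hy, map_zero] at h4
    have h5 : ∑ i, (algebraMap B (Localization S) (y i * s i)) • b i = 0 := by
      simp only [algebraMap_smul]
      exact h4.symm
    ext1 i
    have h6 := Fintype.linearIndependent_iff.1 b.linearIndependent _ h5 i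
    rw [map_eq_zero_iff _ (IsLocalization.injective (Localization S) hSle)] at h6
    exact (mul_eq_zero.1 h6).resolve_right (hS1 _)
  have hcl : ∀ ξ : LocalizedModule S P, ∃ (t : S) (y : Fin r → B), (t : B) • ξ = mk (j y) := by
    intro ξ
    have hξ : ξ ∈ Submodule.span (Localization S) (Set.range b) := by rw [b.span_eq]; trivial
    induction hξ using Submodule.span_induction with
    | mem x h =>
      obtain ⟨i, rfl⟩ := h
      refine ⟨s i, Pi.single i 1, ?_⟩
      rw [hps]
      simp [j, Fintype.linearCombination_apply, Pi.single_apply]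
    | zero => exact ⟨1, 0, by simp⟩
    | add x x' _ _ hx hx' =>
      obtain ⟨t, y, h⟩ := hx
      obtain ⟨t', y', h'⟩ := hx'
      refine ⟨t * t', (t' : B) • y + (t : B) • y', ?_⟩
      rw [map_add, map_add, map_smul, map_smul, map_smul, map_smul, ← h, ← h', smul_add, smul_smul,
        smul_smul, Submonoid.coe_mul, mul_comm (t' : B)]
    | smul c x _ hx =>
      obtain ⟨t, y, h⟩ := hx
      obtain ⟨⟨a, u⟩, hau⟩ := IsLocalization.surj S c
      refine ⟨u * t, a • y, ?_⟩
      have h7 : (u : B) • c = algebraMap B (Localization S) a := by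
        rw [Algebra.smul_def, mul_comm]; exact hau
      rw [map_smul, map_smul, ← h, Submonoid.coe_mul, mul_comm, mul_smul, ← smul_assoc (u : B) c x, h7,
        algebraMap_smul, smul_comm]
  have hcl' : ∀ x : P, ∃ (t : S) (y : Fin r → B), (t : B) • x = j y := by
    intro x
    obtain ⟨t, y, h⟩ := hcl (mk x)
    rw [← map_smul] at h
    obtain ⟨c, hc⟩ := (IsLocalizedModule.eq_iff_exists S mk).1 h
    refine ⟨c * t, (c : B) • y, ?_⟩
    rw [map_smul, Submonoid.coe_mul, mul_smul]
    exact hc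
  obtain ⟨m, e, he⟩ := Submodule.fg_iff_exists_fin_generating_family.1
    (Module.Finite.fg_top (R := B) (M := P))
  choose t y hty using fun i => hcl' (e i)
  refine ⟨r, j, (∏ i, t i : S), hjinj, SetLike.coe_mem _, ?_⟩
  intro x
  have hx : x ∈ Submodule.span B (Set.range e) := by rw [he]; trivial
  induction hx using Submodule.span_induction with
  | mem x h =>
    obtain ⟨i, rfl⟩ := h
    obtain ⟨c, hc⟩ := Finset.dvd_prod_of_mem t (Finset.mem_univ i)
    refine ⟨(c : B) • y i, ?_⟩
    rw [hc, map_smul, ← hty, smul_smul, Submonoid.coe_mul, mul_comm]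
  | zero => exact ⟨0, by simp⟩
  | add x x' _ _ hx hx' =>
    obtain ⟨y, h⟩ := hx
    obtain ⟨y', h'⟩ := hx'
    exact ⟨y + y', by rw [map_add, ← h, ← h', smul_add]⟩
  | smul c x _ hx =>
    obtain ⟨y, h⟩ := hx
    exact ⟨c • y, by rw [map_smul, ← h, smul_comm]⟩

end clear

section shear

lemma exists_shear (n : ℕ) (F : Finset (ℤ × (Fin n → ℤ))) :
    ∃ h : (Fin n → ℤ) →+ ℤ, ∀ p ∈ F, ∀ q ∈ F, p.1 + h p.2 = q.1 + h q.2 → p = q := by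
  let d : ℤ × (Fin n → ℤ) → ℤ[X] := fun a => C a.1 + ∑ i : Fin n, C (a.2 i) * X ^ ((i : ℕ) + 1)
  have hd : ∀ a, d a = 0 → a = 0 := by
    intro a ha
    ext i
    · have := congrArg (fun p => coeff p 0) ha
      simpa [d, coeff_X_pow] using this
    · have := congrArg (fun p => coeff p ((i : ℕ) + 1)) ha
      simpa [d, coeff_X_pow, coeff_C_succ, Fin.val_inj, -eq_intCast, -map_intCast] using this
  have hprod : ∏ pq ∈ F.offDiag, d (pq.1 - pq.2) ≠ 0 := by
    rw [Finset.prod_ne_zero_iff]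
    intro pq hpq h
    rw [Finset.mem_offDiag] at hpq
    exact hpq.2.2 (sub_eq_zero.1 (hd _ h))
  obtain ⟨N, hN⟩ : ∃ N, eval N (∏ pq ∈ F.offDiag, d (pq.1 - pq.2)) ≠ 0 := by
    by_contra hcon
    push Not at hcon
    exact hprod (Polynomial.funext fun N => by rw [hcon, eval_zero])
  rw [eval_prod, Finset.prod_ne_zero_iff] at hN
  let h : (Fin n → ℤ) →+ ℤ :=
    { toFun := fun a => ∑ i : Fin n, a i * N ^ ((i : ℕ) + 1)
      map_zero' := by simp
      map_add' := fun a b => by simp [add_mul, Finset.sum_add_distrib] }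
  refine ⟨h, fun p hp q hq hpq => ?_⟩
  by_contra hne
  refine hN (p, q) (Finset.mem_offDiag.2 ⟨hp, hq, hne⟩) ?_
  have h1 : ∀ a, eval N (d a) = a.1 + h a.2 := by
    intro a
    simp [d, h, eval_finsetSum]
  rw [h1, Prod.fst_sub, Prod.snd_sub, map_sub]
  linarith

/-- The shear automorphism. -/
def shear {G : Type*} [AddCommGroup G] (h : G →+ ℤ) : (ℤ × G) ≃+ (ℤ × G) where
  toFun p := (p.1 + h p.2, p.2)
  invFun p := (p.1 - h p.2, p.2)
  left_inv p := by simp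
  right_inv p := by simp
  map_add' p q := by ext <;> simp; ring

lemma curry_coeff {R M N : Type*} [CommRing R] [AddMonoid M] [AddMonoid N]
    (x : AddMonoidAlgebra R (M × N)) (m : M) (n : N) :
    ((AddMonoidAlgebra.curryRingEquiv x).coeff m).coeff n = x.coeff (m, n) := rfl

lemma zero_or_unit {k G : Type*} [Field k] [AddCommGroup G] (a : AddMonoidAlgebra k G)
    (h : ∀ g g', a.coeff g ≠ 0 → a.coeff g' ≠ 0 → g = g') : a = 0 ∨ IsUnit a := by
  by_cases ha : a = 0
  · exact Or.inl ha
  right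
  obtain ⟨g, hg⟩ : ∃ g, a.coeff g ≠ 0 := by
    by_contra hcon
    push Not at hcon
    exact ha (AddMonoidAlgebra.ext (Finsupp.ext hcon))
  have h1 : a = AddMonoidAlgebra.single g (a.coeff g) := by
    apply AddMonoidAlgebra.ext
    ext g'
    rw [AddMonoidAlgebra.coeff_single]
    by_cases hg' : g = g'
    · subst hg'; simp
    · rw [Finsupp.single_eq_of_ne (Ne.symm hg')]
      by_contra h2
      exact hg' (h _ _ hg h2)
  refine IsUnit.of_mul_eq_one (AddMonoidAlgebra.single (-g) (a.coeff g)⁻¹) ?_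
  rw [h1, AddMonoidAlgebra.single_mul_single]
  simp [hg, AddMonoidAlgebra.one_def]

theorem rowsOK (k : Type u) [Field k] (n : ℕ) :
    RowsOK (AddMonoidAlgebra k (Fin n → ℤ))[T;T⁻¹] := by
  intro m v hv
  obtain ⟨i0, hi0⟩ : ∃ i0, v i0 ≠ 0 := by
    by_contra hcon
    push Not at hcon
    have : v = 0 := funext hcon
    subst this
    rw [Ideal.span_eq_bot.2 (by rintro _ ⟨i, rfl⟩; rfl)] at hv
    exact bot_ne_top hv
  refine ⟨i0, ?_⟩
  let cu : AddMonoidAlgebra k (ℤ × (Fin n → ℤ)) ≃+* (AddMonoidAlgebra k (Fin n → ℤ))[T;T⁻¹] :=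
    AddMonoidAlgebra.curryRingEquiv
  obtain ⟨h, hh⟩ := exists_shear n (cu.symm (v i0)).coeff.support
  let ψ : (AddMonoidAlgebra k (Fin n → ℤ))[T;T⁻¹] ≃+* (AddMonoidAlgebra k (Fin n → ℤ))[T;T⁻¹] :=
    (cu.symm.trans (AddMonoidAlgebra.mapDomainRingEquiv k (shear h))).trans cu
  have hψ : ∀ b m g, ((ψ b).coeff m).coeff g = (cu.symm b).coeff (m - h g, g) := by
    intro b m g
    change (AddMonoidAlgebra.mapDomainRingEquiv k (shear h) (cu.symm b)).coeff (m, g) = _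
    rw [AddMonoidAlgebra.coeff_mapDomainRingEquiv]
    rfl
  have key : Rel (fun i => ψ (v i)) (Pi.single i0 1) := by
    refine laurent_row' _ i0 ?_ ?_ ?_
    · simpa using hi0
    · intro m
      apply zero_or_unit
      intro g g' hg hg'
      rw [hψ] at hg hg'
      have := hh _ (Finsupp.mem_support_iff.2 hg) _ (Finsupp.mem_support_iff.2 hg') (by simp)
      exact congrArg Prod.snd this
    · have h1 := congrArg (Ideal.map ψ.toRingHom) hv
      rw [Ideal.map_span, Ideal.map_top, ← Set.range_comp] at h1
      exact h1
  have key2 := key.map ψ.symm.toRingHom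
  convert key2 using 1
  · ext1 i; simp
  · ext1 i
    by_cases hi : i = i0
    · subst hi; simp
    · simp [hi]

end shear
end LaurentQS


namespace LaurentQS
universe u v w
open Polynomial
open scoped LaurentPolynomial

lemma mapRingHom_toLaurent {R S : Type*} [CommRing R] [CommRing S] (f : R →+* S) (p : R[X]) :
    AddMonoidAlgebra.mapRingHom ℤ f (toLaurent p) = toLaurent (p.map f) := by
  induction p using Polynomial.induction_on' with
  | add p q hp hq => rw [map_add, map_add, hp, hq, Polynomial.map_add, map_add]
  | monomial n a =>
    rw [Polynomial.map_monomial, toLaurent_C_mul_T, toLaurent_C_mul_T,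
      ← LaurentPolynomial.single_eq_C_mul_T, ← LaurentPolynomial.single_eq_C_mul_T,
      AddMonoidAlgebra.mapRingHom_single]

lemma comm_map {k G : Type*} [CommRing k] [AddCommGroup G] (f : k[T;T⁻¹]) :
    (AddMonoidAlgebra.commRingEquiv (R := k) (M := G) (N := ℤ))
      (AddMonoidAlgebra.mapRingHom ℤ (AddMonoidAlgebra.singleZeroRingHom (R := k) (M := G)) f) =
      AddMonoidAlgebra.single 0 f := by
  induction f using AddMonoidAlgebra.induction_linear with
  | zero => simp
  | add x y hx hy => rw [map_add, map_add, hx, hy, AddMonoidAlgebra.single_add]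
  | single m r =>
    rw [AddMonoidAlgebra.mapRingHom_single]
    exact AddMonoidAlgebra.commRingEquiv_single_single m 0 r

lemma map_group_injective {D K G : Type*} [CommRing D] [IsDomain D] [Field K] [Algebra D K]
    [IsFractionRing D K] [AddCommGroup G] :
    Function.Injective (AddMonoidAlgebra.mapRingHom G (algebraMap D K)) := by
  rw [injective_iff_map_eq_zero]
  intro x hx
  apply AddMonoidAlgebra.ext
  ext1 g
  have h1 := AddMonoidAlgebra.coeff_mapRingHom (algebraMap D K) x g
  rw [hx] at h1
  exact (map_eq_zero_iff _ (IsFractionRing.injective D K)).1 h1.symm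

theorem loc_group {D K G B : Type*} [CommRing D] [IsDomain D] [Field K] [Algebra D K]
    [IsFractionRing D K] [AddCommGroup G] [CommRing B] (e : B ≃+* AddMonoidAlgebra D G)
    (ι : D →+* B) (heι : ∀ f, e (ι f) = AddMonoidAlgebra.single 0 f) :
    @IsLocalization _ _ ((nonZeroDivisors D).map ι) (AddMonoidAlgebra K G) _
      ((AddMonoidAlgebra.mapRingHom G (algebraMap D K)).comp e.toRingHom).toAlgebra := by
  let μ : AddMonoidAlgebra D G →+* AddMonoidAlgebra K G :=
    AddMonoidAlgebra.mapRingHom _ (algebraMap D K)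
  have hμ : ∀ g c, μ (AddMonoidAlgebra.single g c) =
      AddMonoidAlgebra.single g (algebraMap D K c) :=
    fun g c => AddMonoidAlgebra.mapRingHom_single _ _ _
  let Φ : B →+* AddMonoidAlgebra K G := μ.comp e.toRingHom
  have hΦι : ∀ f, Φ (ι f) = AddMonoidAlgebra.single 0 (algebraMap D K f) := by
    intro f
    change μ (e (ι f)) = _
    rw [heι, hμ]
  have hμinj : Function.Injective μ := map_group_injective
  have hΦinj : Function.Injective Φ := hμinj.comp e.injective
  let _ : Algebra B (AddMonoidAlgebra K G) := Φ.toAlgebra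
  change IsLocalization ((nonZeroDivisors D).map ι) (AddMonoidAlgebra K G)
  rw [isLocalization_iff]
  refine ⟨?_, ?_, ?_⟩
  · rintro ⟨_, f, hf, rfl⟩
    change IsUnit (Φ (ι f))
    rw [hΦι]
    have h1 : IsUnit (algebraMap D K f) := IsLocalization.map_units K ⟨f, hf⟩
    exact h1.map AddMonoidAlgebra.singleZeroRingHom
  · intro z
    suffices h : ∃ f ∈ nonZeroDivisors D, ∃ b, z * Φ (ι f) = Φ b by
      obtain ⟨f, hf, b, h⟩ := h
      exact ⟨(b, ⟨ι f, f, hf, rfl⟩), h⟩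
    induction z using AddMonoidAlgebra.induction_linear with
    | zero => exact ⟨1, one_mem _, 0, by simp⟩
    | add x y hx hy =>
      obtain ⟨f, hf, b, h⟩ := hx
      obtain ⟨f', hf', b', h'⟩ := hy
      refine ⟨f * f', mul_mem hf hf', b * ι f' + b' * ι f, ?_⟩
      rw [map_mul, map_mul, map_add, map_mul, map_mul, ← h, ← h']
      ring
    | single g c =>
      obtain ⟨⟨a, f⟩, hf⟩ := IsLocalization.surj (nonZeroDivisors D) c
      refine ⟨f, f.2, e.symm (AddMonoidAlgebra.single g a), ?_⟩
      rw [hΦι, AddMonoidAlgebra.single_mul_single, add_zero]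
      change _ = μ (e (e.symm _))
      rw [e.apply_symm_apply, hμ]
      exact congrArg _ hf
  · intro x y hxy
    exact ⟨1, by rw [hΦinj hxy]⟩

theorem clear_group {D : Type u} {K : Type v} {G : Type*} {B : Type u} [CommRing D] [IsDomain D]
    [Field K] [Algebra D K] [IsFractionRing D K] [AddCommGroup G] [CommRing B] [IsDomain B]
    (e : B ≃+* AddMonoidAlgebra D G)
    (ι : D →+* B) (heι : ∀ f, e (ι f) = AddMonoidAlgebra.single 0 f)
    (hK : PF (AddMonoidAlgebra K G))
    (P : Type w) [AddCommGroup P] [Module B P] [Module.Finite B P] [Module.Projective B P] :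
    ∃ (r : ℕ) (j : (Fin r → B) →ₗ[B] P) (f : D), Function.Injective j ∧ f ≠ 0 ∧
      ∀ x, ∃ y, ι f • x = j y := by
  have hιinj : Function.Injective ι := by
    intro x y hxy
    have h1 := congrArg e hxy
    rw [heι, heι] at h1
    have h2 := congrArg (fun z => z.coeff 0) h1
    simpa using h2
  have hS0 : (0 : B) ∉ (nonZeroDivisors D).map ι := by
    rintro ⟨f, hf, hf0⟩
    rw [← map_zero ι] at hf0
    exact nonZeroDivisors.ne_zero hf (hιinj hf0)
  let _ : Algebra B (AddMonoidAlgebra K G) :=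
    ((AddMonoidAlgebra.mapRingHom G (algebraMap D K)).comp e.toRingHom).toAlgebra
  have hloc : IsLocalization ((nonZeroDivisors D).map ι) (AddMonoidAlgebra K G) :=
    loc_group (K := K) e ι heι
  obtain ⟨r, j, _, hj, ⟨f, hf, rfl⟩, hfj⟩ :=
    clear_denominators ((nonZeroDivisors D).map ι) hS0 hK P
  exact ⟨r, j, f, hj, nonZeroDivisors.ne_zero hf, hfj⟩

theorem stably_free' {k A : Type u} [Field k] [CommRing A] [IsDomain A] [IsNoetherianRing A]
    (hA : PF A) (a : k →+* A) (P : Type v) [AddCommGroup P] [Module A[T;T⁻¹] P]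
    [Module.Finite A[T;T⁻¹] P] [Module.Projective A[T;T⁻¹] P] {r : ℕ}
    (j : (Fin r → A[T;T⁻¹]) →ₗ[A[T;T⁻¹]] P) (hj : Function.Injective j)
    (f : k[T;T⁻¹]) (hf0 : f ≠ 0)
    (hfj : ∀ x : P, ∃ y, (AddMonoidAlgebra.mapRingHom ℤ a f : A[T;T⁻¹]) • x = j y) :
    ∃ s, Module.Free A[T;T⁻¹] (P × (Fin s → A[T;T⁻¹])) := by
  obtain ⟨c, g, hc, hg, hg0, hcg⟩ := normalize_laurent f hf0 (fun m => by
    by_cases h : f.coeff m = 0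
    · exact Or.inl h
    · exact Or.inr (isUnit_iff_ne_zero.2 h))
  have h1 := mapRingHom_toLaurent a g
  refine stably_free hA j hj (g.map a) (hg.map _) (by rw [coeff_map]; exact hg0.map _) ?_
  intro x
  obtain ⟨y, hy⟩ := hfj x
  refine ⟨(AddMonoidAlgebra.mapRingHom ℤ a c : A[T;T⁻¹]) • y, ?_⟩
  rw [← h1, ← hcg, map_mul, mul_smul, map_smul, ← hy]

theorem step (n : ℕ)
    (IH : ∀ (K : Type u) [Field K], PF (AddMonoidAlgebra K (Fin n → ℤ)))
    (k : Type u) [Field k] : PF (AddMonoidAlgebra k (Fin n → ℤ))[T;T⁻¹] := by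
  intro P _ _ _ _
  have hnoeth : IsNoetherianRing (AddMonoidAlgebra k (Fin n → ℤ)) :=
    Algebra.FiniteType.isNoetherianRing k _
  obtain ⟨r, j, f, hj, hf, hfj⟩ := clear_group (D := k[T;T⁻¹])
    (K := FractionRing k[T;T⁻¹]) (G := Fin n → ℤ) (B := (AddMonoidAlgebra k (Fin n → ℤ))[T;T⁻¹])
    (AddMonoidAlgebra.commRingEquiv (R := k) (M := Fin n → ℤ) (N := ℤ))
    (AddMonoidAlgebra.mapRingHom ℤ (AddMonoidAlgebra.singleZeroRingHom (R := k) (M := Fin n → ℤ)))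
    (fun f => comm_map f) (IH (FractionRing k[T;T⁻¹])) P
  obtain ⟨s, hs⟩ := stably_free' (IH k) _ P j hj f hf hfj
  exact (rowsOK k n).cancel_pow P s hs

theorem pf_group (n : ℕ) : ∀ (k : Type u) [Field k], PF (AddMonoidAlgebra k (Fin n → ℤ)) := by
  induction n with
  | zero =>
    intro k _
    have h : PF k := fun P _ _ _ _ => inferInstance
    exact h.ringEquiv (AddMonoidAlgebra.uniqueRingEquiv (Fin 0 → ℤ)).symm
  | succ n ih =>
    intro k _
    refine (step n ih k).ringEquiv ?_
    exact (AddMonoidAlgebra.curryRingEquiv (R := k) (M := ℤ) (N := Fin n → ℤ)).symm.trans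
      (AddMonoidAlgebra.mapDomainRingEquiv k
        (Fin.consLinearEquiv ℤ (fun _ : Fin (n + 1) => ℤ)).toAddEquiv)

/-- The exponent map. -/
def expo (d : ℕ) : (Fin d →₀ ℕ) →+ (Fin d → ℤ) where
  toFun t i := (t i : ℤ)
  map_zero' := by ext; simp
  map_add' s t := by ext; simp

/-- Polynomials to Laurent polynomials. -/
noncomputable def toL (k : Type u) [Field k] (d : ℕ) :
    MvPolynomial (Fin d) k →+* AddMonoidAlgebra k (Fin d → ℤ) :=
  AddMonoidAlgebra.mapDomainRingHom k (expo d)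

lemma toL_monomial (k : Type u) [Field k] (d : ℕ) (t : Fin d →₀ ℕ) (c : k) :
    toL k d (MvPolynomial.monomial t c) = AddMonoidAlgebra.single (expo d t) c :=
  AddMonoidAlgebra.mapDomain_single

lemma toL_injective (k : Type u) [Field k] (d : ℕ) : Function.Injective (toL k d) := by
  apply AddMonoidAlgebra.mapDomain_injective
  intro s t h
  ext i
  have := congrFun h i
  exact Int.ofNat_injective this

theorem toL_isLocalization (k : Type u) [Field k] (d : ℕ) :
    @IsLocalization _ _
      (Submonoid.closure (Set.range (MvPolynomial.X : Fin d → MvPolynomial (Fin d) k)))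
      (AddMonoidAlgebra k (Fin d → ℤ)) _ (toL k d).toAlgebra := by
  let _ := (toL k d).toAlgebra
  rw [isLocalization_iff]
  have hmem : ∀ t, MvPolynomial.monomial t (1 : k) ∈
      Submonoid.closure (Set.range (MvPolynomial.X : Fin d → MvPolynomial (Fin d) k)) := by
    intro t
    rw [MvPolynomial.monomial_eq, MvPolynomial.C_1, one_mul]
    exact prod_mem fun i _ => pow_mem (Submonoid.subset_closure (Set.mem_range_self i)) _
  refine ⟨?_, ?_, ?_⟩
  · have h : Submonoid.closure (Set.range (MvPolynomial.X : Fin d → MvPolynomial (Fin d) k)) ≤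
        (IsUnit.submonoid _).comap (toL k d).toMonoidHom := by
      rw [Submonoid.closure_le]
      rintro _ ⟨i, rfl⟩
      change IsUnit (toL k d (MvPolynomial.monomial _ 1))
      rw [toL_monomial]
      refine IsUnit.of_mul_eq_one (AddMonoidAlgebra.single (-(expo d (Finsupp.single i 1))) 1) ?_
      rw [AddMonoidAlgebra.single_mul_single]
      simp [AddMonoidAlgebra.one_def]
    rintro ⟨y, hy⟩
    exact h hy
  · intro z
    change ∃ x : _ × (Submonoid.closure (Set.range (MvPolynomial.X : Fin d → MvPolynomial (Fin d) k))),
      z * toL k d x.2 = toL k d x.1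
    induction z using AddMonoidAlgebra.induction_linear with
    | zero => exact ⟨(0, 1), by simp⟩
    | add x y hx hy =>
      obtain ⟨⟨a, s⟩, h⟩ := hx
      obtain ⟨⟨a', s'⟩, h'⟩ := hy
      refine ⟨(a * s' + a' * s, s * s'), ?_⟩
      simp only [Submonoid.coe_mul, map_mul, map_add] at h h' ⊢
      rw [← h, ← h']
      ring
    | single g c =>
      refine ⟨(MvPolynomial.monomial (Finsupp.equivFunOnFinite.symm fun i => (g i).toNat) c,
        ⟨_, hmem (Finsupp.equivFunOnFinite.symm fun i => (- g i).toNat)⟩), ?_⟩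
      simp only [toL_monomial, AddMonoidAlgebra.single_mul_single, mul_one]
      congr 1
      ext i
      simp only [expo, AddMonoidHom.coe_mk, ZeroHom.coe_mk, Pi.add_apply,
        Finsupp.coe_equivFunOnFinite_symm]
      omega
  · intro x y hxy
    exact ⟨1, by rw [toL_injective k d hxy]⟩

end LaurentQS

open MvPolynomial

theorem projective_module_over_laurent_ring_free
    (k : Type*) [Field k] (d : ℕ)
    (R : Type*) [CommRing R] [Algebra (MvPolynomial (Fin d) k) R]
    [IsLocalization
      (Submonoid.closure (Set.range (X : Fin d → MvPolynomial (Fin d) k))) R]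
    (P : Type*) [AddCommGroup P] [Module R P]
    [Module.Finite R P] [Module.Projective R P] :
    Module.Free R P := by
  let _ := (LaurentQS.toL k d).toAlgebra
  have := LaurentQS.toL_isLocalization k d
  have h := (LaurentQS.pf_group d k).ringEquiv
    (IsLocalization.algEquiv
      (Submonoid.closure (Set.range (X : Fin d → MvPolynomial (Fin d) k)))
      (AddMonoidAlgebra k (Fin d → ℤ)) R).toRingEquiv
  exact h.any P
end

section
/- Every finitely generated projective module over the mixed Laurent polynomial ring k[x₁^{±1}, ..., xₐ^{±1}, y₁, ..., y_b] over a field k is free. -/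
section QSSection

open Polynomial

namespace QSProof

/-- An idempotent matrix whose image is free, expressed through explicit matrices. -/
def SplitsFree {B : Type*} [CommRing B] {ι : Type*} [Fintype ι] (e : Matrix ι ι B) : Prop :=
  ∃ (r : ℕ) (U : Matrix ι (Fin r) B) (V : Matrix (Fin r) ι B), U * V = e ∧ V * U = 1

/-- Every idempotent matrix over `B` has free image. -/
def QS (B : Type*) [CommRing B] : Prop :=
  ∀ (n : ℕ) (e : Matrix (Fin n) (Fin n) B), e * e = e → SplitsFree e

lemma QS.fintype {B : Type*} [CommRing B] (h : QS B) {ι : Type*} [Fintype ι]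
    (e : Matrix ι ι B) (he : e * e = e) : SplitsFree e := by
  classical
  let σ := Fintype.equivFin ι
  obtain ⟨r, U, V, h1, h2⟩ := h _ (e.submatrix σ.symm σ.symm) (by
    rw [Matrix.submatrix_mul_equiv, he])
  refine ⟨r, U.submatrix σ id, V.submatrix id σ, ?_, ?_⟩
  · rw [← Matrix.submatrix_mul _ _ _ _ _ Function.bijective_id, h1]
    ext i j; simp
  · rw [Matrix.submatrix_mul_equiv, h2]; simp

lemma SplitsFree.map {B C : Type*} [CommRing B] [CommRing C] {ι : Type*} [Fintype ι]
    {e : Matrix ι ι B} (h : SplitsFree e) (φ : B →+* C) : SplitsFree (e.map φ) := by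
  obtain ⟨r, U, V, h1, h2⟩ := h
  refine ⟨r, U.map φ, V.map φ, ?_, ?_⟩
  · rw [← Matrix.map_mul, h1]
  · rw [← Matrix.map_mul, h2]; simp

/-- transport along an equivalence of idempotents -/
lemma SplitsFree.trans {B : Type*} [CommRing B] {ι κ : Type*} [Fintype ι] [Fintype κ]
    {e : Matrix ι ι B} {e' : Matrix κ κ B} (h : SplitsFree e')
    (he : e * e = e) (Y : Matrix ι κ B) (X : Matrix κ ι B) (h1 : Y * X = e) (h2 : X * Y = e') :
    SplitsFree e := by
  obtain ⟨r, U, V, h3, h4⟩ := h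
  refine ⟨r, Y * U, V * X, ?_, ?_⟩
  · calc Y * U * (V * X) = Y * (U * V) * X := by simp only [Matrix.mul_assoc]
      _ = (Y * X) * (Y * X) := by rw [h3, ← h2]; simp only [Matrix.mul_assoc]
      _ = e := by rw [h1, he]
  · calc V * X * (Y * U) = V * (X * Y) * U := by simp only [Matrix.mul_assoc]
      _ = (V * U) * (V * U) := by rw [h2, ← h3]; simp only [Matrix.mul_assoc]
      _ = 1 := by rw [h4, Matrix.one_mul]

lemma QS.of_equiv {B C : Type*} [CommRing B] [CommRing C] (h : QS B) (φ : B ≃+* C) : QS C := by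
  intro n e he
  have := (h n (e.map φ.symm) (by rw [← Matrix.map_mul, he])).map φ.toRingHom
  convert this
  ext i j; simp

lemma QS.of_pid (B : Type*) [CommRing B] [IsDomain B] [IsPrincipalIdealRing B] : QS B := by
  classical
  intro n e he
  let E : (Fin n → B) →ₗ[B] (Fin n → B) := Matrix.toLin' e
  let P := LinearMap.range E
  obtain ⟨r, b⟩ := Submodule.basisOfPid (Pi.basisFun B (Fin n)) P
  let inc : (Fin r → B) →ₗ[B] (Fin n → B) := P.subtype ∘ₗ b.equivFun.symm.toLinearMap
  let pr : (Fin n → B) →ₗ[B] (Fin r → B) := b.equivFun.toLinearMap ∘ₗ E.rangeRestrict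
  have hE : ∀ x, E (E x) = E x := by
    intro x
    simp only [E, Matrix.toLin'_apply, Matrix.mulVec_mulVec, he]
  refine ⟨r, LinearMap.toMatrix' inc, LinearMap.toMatrix' pr, ?_, ?_⟩
  · rw [← LinearMap.toMatrix'_comp]
    have : inc ∘ₗ pr = E := by
      ext1 x; ext1; simp [inc, pr]
    rw [this]; simp [E]
  · rw [← LinearMap.toMatrix'_comp]
    have : pr ∘ₗ inc = LinearMap.id := by
      apply LinearMap.ext
      intro x
      simp only [inc, pr, LinearMap.comp_apply, LinearEquiv.coe_coe, LinearMap.id_apply]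
      have : E.rangeRestrict (P.subtype (b.equivFun.symm x)) = b.equivFun.symm x := by
        apply Subtype.ext
        obtain ⟨y, hy⟩ := (b.equivFun.symm x).2
        simp only [LinearMap.codRestrict_apply, Submodule.subtype_apply, LinearMap.rangeRestrict]
        rw [← hy, hE]
      rw [this]; exact b.equivFun.apply_symm_apply x
    rw [this]; simp

lemma QS.free {B : Type*} [CommRing B] (h : QS B) (P : Type*) [AddCommGroup P] [Module B P]
    [Module.Finite B P] [Module.Projective B P] : Module.Free B P := by
  classical
  obtain ⟨n, f, g, -, -, hfg⟩ := Module.Finite.exists_comp_eq_id_of_projective B P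
  have hfg' : ∀ x, f (g x) = x := fun x => LinearMap.congr_fun hfg x
  obtain ⟨r, U, V, h1, h2⟩ := h n (LinearMap.toMatrix' (g ∘ₗ f)) (by
    rw [← LinearMap.toMatrix'_comp]
    congr 1
    ext1 x; ext1; simp [hfg'])
  have h1' : ∀ x, U.mulVec (V.mulVec x) = g (f x) := by
    intro x
    rw [Matrix.mulVec_mulVec, h1, LinearMap.toMatrix'_mulVec]; rfl
  have h2' : ∀ x, V.mulVec (U.mulVec x) = x := by
    intro x
    rw [Matrix.mulVec_mulVec, h2, Matrix.one_mulVec]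
  let eqv : P ≃ₗ[B] (Fin r → B) := LinearEquiv.ofLinearMap (V.mulVecLin ∘ₗ g) (f ∘ₗ U.mulVecLin)
    (by
      apply LinearMap.ext
      intro x
      simp only [LinearMap.comp_apply, Matrix.mulVecLin_apply, LinearMap.id_apply]
      rw [← h1', h2', h2'])
    (by
      apply LinearMap.ext
      intro x
      simp only [LinearMap.comp_apply, Matrix.mulVecLin_apply, LinearMap.id_apply]
      rw [h1', hfg', hfg'])
  exact Module.Free.of_equiv eqv.symm

/-- A Nakayama lemma for modules over `A[X]`, `A` local. -/
lemma nak {A : Type*} [CommRing A] [IsLocalRing A] {M : Type*} [AddCommGroup M] [Module A[X] M]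
    [Module A M] [IsScalarTower A A[X] M] (f : A[X]) (hf : f.Monic) (F : Submodule A[X] M)
    (hF : F.FG) (N : Submodule A M) (h1 : ∀ z ∈ F, f • z ∈ N)
    (h2 : ∀ z ∈ F, z ∈ N ⊔ (IsLocalRing.maximalIdeal A) • (F.restrictScalars A)) :
    F.restrictScalars A ≤ N := by
  classical
  obtain ⟨S, rfl⟩ := hF
  let T : Finset M := (S ×ˢ Finset.range (f.natDegree + 1)).image (fun p => (X ^ p.2 : A[X]) • p.1)
  let G : Submodule A M := Submodule.span A (T : Set M)
  have hGF : G ≤ (Submodule.span A[X] (S : Set M)).restrictScalars A := by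
    rw [Submodule.span_le]
    intro z hz
    simp only [T, Finset.coe_image, Set.mem_image] at hz
    obtain ⟨p, hp, rfl⟩ := hz
    have hp' := (Finset.mem_product.1 (Finset.mem_coe.1 hp)).1
    exact Submodule.smul_mem _ _ (Submodule.subset_span hp')
  have hFG : (Submodule.span A[X] (S : Set M)).restrictScalars A ≤ N ⊔ G := by
    intro z hz
    obtain ⟨c, -, rfl⟩ := Submodule.mem_span_finset.1 hz
    refine Submodule.sum_mem _ fun s hs => ?_
    have hsF : s ∈ Submodule.span A[X] (S : Set M) := Submodule.subset_span hs
    rw [← Polynomial.modByMonic_add_div (c s) f, add_comm, add_smul, mul_smul]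
    refine Submodule.add_mem _ (Submodule.mem_sup_left (h1 _ (Submodule.smul_mem _ _ hsF)))
      (Submodule.mem_sup_right ?_)
    rw [Polynomial.as_sum_range' (c s %ₘ f) (f.natDegree + 1)
      (Nat.lt_succ_of_le (Polynomial.natDegree_modByMonic_le _ hf)), Finset.sum_smul]
    refine Submodule.sum_mem _ fun i hi => ?_
    rw [← Polynomial.C_mul_X_pow_eq_monomial, ← Polynomial.smul_eq_C_mul, smul_assoc]
    refine Submodule.smul_mem _ _ (Submodule.subset_span ?_)
    simp only [T, Finset.coe_image, Set.mem_image]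
    exact ⟨(s, i), Finset.mem_coe.2 (Finset.mem_product.2 ⟨hs, hi⟩), rfl⟩
  have hG : G ≤ N := by
    refine Submodule.le_of_le_smul_of_le_jacobson_bot ⟨T, rfl⟩
      (IsLocalRing.maximalIdeal_le_jacobson _) ?_
    intro z hz
    have := h2 z (hGF hz)
    refine (sup_le le_sup_left ?_ : N ⊔ _ ≤ _) this
    refine (Submodule.smul_mono le_rfl hFG).trans ?_
    rw [Submodule.smul_sup]
    exact sup_le (Submodule.smul_le_right.trans le_sup_left) le_sup_right
  exact hFG.trans (sup_le le_rfl hG)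


/-- The monic polynomials. -/
def monics (A : Type*) [CommRing A] : Submonoid A[X] where
  carrier := {f | f.Monic}
  one_mem' := monic_one
  mul_mem' := fun h1 h2 => Monic.mul h1 h2

section Horrocks

variable {A : Type*} [CommRing A] [IsLocalRing A]

/-- Localization at monic polynomials. -/
abbrev LL (A : Type*) [CommRing A] := Localization (monics A)

/-- The rational function field over the residue field. -/
abbrev KK (A : Type*) [CommRing A] [IsLocalRing A] := FractionRing (IsLocalRing.ResidueField A)[X]

/-- inclusion of polynomials -/
noncomputable abbrev ii (A : Type*) [CommRing A] : A[X] →+* LL A := algebraMap A[X] (LL A)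

lemma ii_unit {q : A[X]} (hq : q.Monic) : IsUnit (ii A q) :=
  IsLocalization.map_units (LL A) (⟨q, hq⟩ : monics A)

lemma ii_inj : Function.Injective (ii A) :=
  IsLocalization.injective (LL A) (M := monics A) (fun q hq => Monic.mem_nonZeroDivisors hq)

lemma ii_surj (z : LL A) : ∃ p q : A[X], q.Monic ∧ z * ii A q = ii A p := by
  obtain ⟨⟨p, q⟩, h⟩ := IsLocalization.surj (monics A) z
  exact ⟨p, q, q.2, h⟩

/-- reduction of polynomials -/
noncomputable abbrev red (A : Type*) [CommRing A] [IsLocalRing A] :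
    A[X] →+* (IsLocalRing.ResidueField A)[X] := Polynomial.mapRingHom (IsLocalRing.residue A)

/-- inclusion of polynomials over the residue field -/
noncomputable abbrev jj (A : Type*) [CommRing A] [IsLocalRing A] :
    (IsLocalRing.ResidueField A)[X] →+* KK A := algebraMap _ _

lemma jj_inj : Function.Injective (jj A) := IsFractionRing.injective _ _

/-- reduction of `A<X>` -/
noncomputable def rho (A : Type*) [CommRing A] [IsLocalRing A] : LL A →+* KK A :=
  IsLocalization.lift (M := monics A) (g := (jj A).comp (red A)) (fun q => by
    have hq : Monic (red A q.1) := by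
      have h : Monic q.1 := q.2
      simpa using h.map (IsLocalRing.residue A)
    rw [isUnit_iff_ne_zero, RingHom.comp_apply]
    intro h
    exact hq.ne_zero (jj_inj (h.trans (map_zero _).symm)))

lemma rho_ii (p : A[X]) : rho A (ii A p) = jj A (red A p) := by
  unfold rho
  rw [IsLocalization.lift_eq]; rfl

/-- proper fractions -/
noncomputable def proper (A : Type*) [CommRing A] [IsLocalRing A] : Submodule A (LL A) where
  carrier := {z | ∃ p q : A[X], q.Monic ∧ p.degree < q.degree ∧ z * ii A q = ii A p}
  zero_mem' := ⟨0, 1, monic_one, by simp, by simp⟩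
  add_mem' := by
    rintro z w ⟨p, q, hq, hpq, h⟩ ⟨p', q', hq', hpq', h'⟩
    refine ⟨p * q' + p' * q, q * q', hq.mul hq', ?_, ?_⟩
    · rw [hq'.degree_mul]
      refine lt_of_le_of_lt (degree_add_le _ _) (max_lt ?_ ?_)
      · rw [hq'.degree_mul]
        exact WithBot.add_lt_add_right (by simpa using hq'.ne_zero) hpq
      · rw [hq.degree_mul, add_comm]
        exact WithBot.add_lt_add_left (by simpa using hq.ne_zero) hpq'
    · rw [map_add, map_mul, map_mul, map_mul, ← h, ← h']; ring
  smul_mem' := by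
    rintro c z ⟨p, q, hq, hpq, h⟩
    refine ⟨c • p, q, hq, lt_of_le_of_lt (degree_smul_le _ _) hpq, ?_⟩
    rw [smul_mul_assoc, h, ← algebraMap_smul A[X] c p, ← algebraMap_smul A[X] c (ii A p)]
    simp [Algebra.smul_def]

lemma proper_mul {z w : LL A} (hz : z ∈ proper A) (hw : w ∈ proper A) : z * w ∈ proper A := by
  obtain ⟨p, q, hq, hpq, h⟩ := hz
  obtain ⟨p', q', hq', hpq', h'⟩ := hw
  refine ⟨p * p', q * q', hq.mul hq', ?_, ?_⟩
  · rw [hq'.degree_mul]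
    refine lt_of_le_of_lt (degree_mul_le _ _) ?_
    by_cases hp' : p' = 0
    · subst hp'
      rw [degree_zero, WithBot.add_bot, bot_lt_iff_ne_bot]
      rw [← hq'.degree_mul]
      simpa using (hq.mul hq').ne_zero
    · calc p.degree + p'.degree < q.degree + p'.degree :=
          WithBot.add_lt_add_right (by simpa using hp') hpq
        _ ≤ _ := by gcongr
  · rw [map_mul, map_mul, ← h, ← h']; ring

lemma proper_unit {z : LL A} (hz : z ∈ proper A) : IsUnit (1 + z) := by
  obtain ⟨p, q, hq, hpq, h⟩ := hz
  have h1 : (1 + z) * ii A q = ii A (q + p) := by rw [add_mul, h, map_add, one_mul]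
  have h2 : IsUnit ((1 + z) * ii A q) := by
    rw [h1]; exact ii_unit (hq.add_of_left hpq)
  exact isUnit_of_mul_isUnit_left h2

lemma proper_decomp (z : LL A) : ∃ g : A[X], z - ii A g ∈ proper A := by
  obtain ⟨p, q, hq, h⟩ := ii_surj z
  refine ⟨p /ₘ q, p %ₘ q, q, hq, degree_modByMonic_lt _ hq, ?_⟩
  rw [sub_mul, h, ← map_mul, ← map_sub, sub_eq_iff_eq_add.2]
  rw [mul_comm, modByMonic_add_div]

lemma proper_poly {z : LL A} (hz : z ∈ proper A) (g : (IsLocalRing.ResidueField A)[X])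
    (hg : rho A z = jj A g) : g = 0 := by
  obtain ⟨p, q, hq, hpq, h⟩ := hz
  have h1 : g * red A q = red A p := by
    apply jj_inj
    rw [map_mul, ← hg, ← rho_ii, ← rho_ii, ← map_mul, h]
  have hq' : Monic (red A q) := by simpa using hq.map (IsLocalRing.residue A)
  by_contra hg0
  have h2 : (red A p).degree = g.degree + (red A q).degree := by rw [← h1, degree_mul]
  have h3 : (red A p).degree ≤ p.degree := by simpa using degree_map_le
  have h4 : (red A q).degree = q.degree := by
    simpa using hq.degree_map (IsLocalRing.residue A)
  have h5 : 0 ≤ g.degree := zero_le_degree_iff.2 hg0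
  have h6 : q.degree ≤ g.degree + q.degree := le_add_of_nonneg_left h5
  rw [h4] at h2
  rw [h2] at h3
  exact absurd (lt_of_le_of_lt (h6.trans h3) hpq) (lt_irrefl _)

/-- `A + proper` as a subring -/
noncomputable def OO (A : Type*) [CommRing A] [IsLocalRing A] : Subring (LL A) where
  carrier := {z | ∃ a : A, z - algebraMap A (LL A) a ∈ proper A}
  zero_mem' := ⟨0, by simp⟩
  one_mem' := ⟨1, by simp⟩
  add_mem' := by
    rintro z w ⟨a, ha⟩ ⟨b, hb⟩
    refine ⟨a + b, ?_⟩
    have := add_mem ha hb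
    rw [map_add]
    convert this using 1; ring
  neg_mem' := by
    rintro z ⟨a, ha⟩
    refine ⟨-a, ?_⟩
    have := neg_mem ha
    rw [map_neg]
    convert this using 1; ring
  mul_mem' := by
    rintro z w ⟨a, ha⟩ ⟨b, hb⟩
    refine ⟨a * b, ?_⟩
    have := add_mem (add_mem (proper_mul ha hb) ((proper A).smul_mem a hb))
      ((proper A).smul_mem b ha)
    rw [map_mul]
    convert this using 1
    rw [Algebra.smul_def, Algebra.smul_def]; ring

/-- `proper` as an ideal of `OO` -/
noncomputable def OI (A : Type*) [CommRing A] [IsLocalRing A] : Ideal (OO A) where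
  carrier := {z | z.1 ∈ proper A}
  zero_mem' := by simp
  add_mem' := by
    intro z w h1 h2
    exact (proper A).add_mem h1 h2
  smul_mem' := by
    rintro ⟨c, a, ha⟩ ⟨z, hz'⟩ hz
    have := add_mem (proper_mul ha hz) ((proper A).smul_mem a hz)
    change c * z ∈ proper A
    convert this using 1
    rw [Algebra.smul_def]; ring

lemma det_unit {r : ℕ} (Λ : Matrix (Fin r) (Fin r) (LL A)) (h : ∀ i j, Λ i j ∈ proper A) :
    IsUnit (1 - Λ).det := by
  let Λ' : Matrix (Fin r) (Fin r) (OO A) := fun i j => ⟨Λ i j, 0, by simpa using h i j⟩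
  have h1 : Λ'.map (OO A).subtype = Λ := by ext i j; rfl
  have h2 : Λ'.map (Ideal.Quotient.mk (OI A)) = 0 := by
    ext i j
    exact Ideal.Quotient.eq_zero_iff_mem.2 (h i j)
  have h3 : Ideal.Quotient.mk (OI A) (1 - Λ').det = 1 := by
    rw [RingHom.map_det, map_sub]
    rw [RingHom.mapMatrix_apply, RingHom.mapMatrix_apply, h2]; simp
  have h4 : (1 - Λ').det - 1 ∈ OI A := by
    rw [← Ideal.Quotient.eq_zero_iff_mem, map_sub, h3]; simp
  have h5 : ((1 - Λ').det : LL A) = (1 - Λ).det := by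
    change (OO A).subtype _ = _
    rw [RingHom.map_det, map_sub, RingHom.mapMatrix_apply, RingHom.mapMatrix_apply, h1]; simp
  have h6 : (1 - Λ).det - 1 ∈ proper A := by rw [← h5]; exact h4
  have := proper_unit h6
  simpa using this

lemma coeff_mem_of_red {p : A[X]} (h : red A p = 0) (j : ℕ) :
    p.coeff j ∈ IsLocalRing.maximalIdeal A := by
  rw [← IsLocalRing.residue_eq_zero_iff]
  have := congrArg (fun q => q.coeff j) h
  simpa using this

lemma mem_smul_of_rho {z : LL A} (h : rho A z = 0) :
    z ∈ IsLocalRing.maximalIdeal A • (⊤ : Submodule A (LL A)) := by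
  obtain ⟨p, q, hq, hz⟩ := ii_surj z
  have hp : red A p = 0 := by
    apply jj_inj
    rw [← rho_ii, ← hz, map_mul, h, zero_mul, map_zero]
  obtain ⟨u, hu⟩ := ii_unit hq
  have h1 : z = ii A p * (u⁻¹ : (LL A)ˣ) := by
    rw [← hz, ← hu, mul_assoc, Units.mul_inv, mul_one]
  rw [h1, p.as_sum_range, map_sum, Finset.sum_mul]
  refine Submodule.sum_mem _ fun j _ => ?_
  have h2 : ii A (monomial j (p.coeff j)) * (u⁻¹ : (LL A)ˣ)
      = p.coeff j • (ii A (X ^ j) * (u⁻¹ : (LL A)ˣ)) := by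
    rw [← smul_mul_assoc]
    congr 1
    rw [← C_mul_X_pow_eq_monomial, map_mul, Algebra.smul_def]
    rfl
  rw [h2]
  exact Submodule.smul_mem_smul (coeff_mem_of_red hp j) trivial

lemma red_surj : Function.Surjective (red A) :=
  Polynomial.map_surjective _ IsLocalRing.residue_surjective

lemma lift_unit_poly (p : (IsLocalRing.ResidueField A)[X]) (hp : p ≠ 0) :
    ∃ u : (LL A)ˣ, rho A u = jj A p := by
  have hc : p.leadingCoeff ≠ 0 := leadingCoeff_ne_zero.2 hp
  have hm : (p * C p.leadingCoeff⁻¹).Monic := monic_mul_leadingCoeff_inv hp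
  obtain ⟨q, hq, -, hqm⟩ := Polynomial.lifts_and_degree_eq_and_monic
    ((Polynomial.mem_lifts _).2 (red_surj (p * C p.leadingCoeff⁻¹))) hm
  obtain ⟨a, ha⟩ := IsLocalRing.residue_surjective p.leadingCoeff
  have hau : IsUnit a := by
    rw [← IsLocalRing.residue_ne_zero_iff_isUnit, ha]; exact hc
  have h1 : IsUnit (ii A (C a * q)) := by
    rw [map_mul]
    exact ((hau.map C).map (ii A)).mul (ii_unit hqm)
  refine ⟨h1.unit, ?_⟩
  rw [IsUnit.unit_spec, rho_ii]
  congr 1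
  change Polynomial.map _ _ = _
  rw [Polynomial.map_mul, hq, map_C, ha, mul_comm, mul_assoc, ← C_mul,
    inv_mul_cancel₀ hc, C_1, mul_one]

lemma rho_surj (z : KK A) : ∃ w, rho A w = z := by
  obtain ⟨p, q, hq, rfl⟩ := IsFractionRing.div_surjective (A := (IsLocalRing.ResidueField A)[X]) z
  obtain ⟨u, hu⟩ := lift_unit_poly q (nonZeroDivisors.ne_zero hq)
  obtain ⟨p', rfl⟩ := red_surj p
  refine ⟨ii A p' * (u⁻¹ : (LL A)ˣ), ?_⟩
  rw [map_mul, rho_ii, map_units_inv, hu]; rfl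

lemma lift_unit (z : KK A) (hz : z ≠ 0) : ∃ u : (LL A)ˣ, rho A u = z := by
  obtain ⟨p, q, hq, rfl⟩ := IsFractionRing.div_surjective (A := (IsLocalRing.ResidueField A)[X]) z
  obtain ⟨u, hu⟩ := lift_unit_poly q (nonZeroDivisors.ne_zero hq)
  obtain ⟨v, hv⟩ := lift_unit_poly p (by rintro rfl; simp at hz)
  refine ⟨v * u⁻¹, ?_⟩
  rw [Units.val_mul, map_mul, map_units_inv, hu, hv]; rfl

lemma lift_GL {r : ℕ} (g : Matrix (Fin r) (Fin r) (KK A)) (hg : g.det ≠ 0) :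
    ∃ G G' : Matrix (Fin r) (Fin r) (LL A), G * G' = 1 ∧ G' * G = 1 ∧ G.map (rho A) = g := by
  refine Matrix.diagonal_transvection_induction_of_det_ne_zero
    (fun g => ∃ G G' : Matrix (Fin r) (Fin r) (LL A), G * G' = 1 ∧ G' * G = 1 ∧
      G.map (rho A) = g) g hg ?_ ?_ ?_
  · intro D hD
    rw [Matrix.det_diagonal, Finset.prod_ne_zero_iff] at hD
    choose u hu using fun i => lift_unit (D i) (hD i (Finset.mem_univ i))
    refine ⟨Matrix.diagonal fun i => (u i : LL A),
      Matrix.diagonal fun i => ((u i)⁻¹ : (LL A)ˣ), ?_, ?_, ?_⟩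
    · rw [Matrix.diagonal_mul_diagonal]; simp
    · rw [Matrix.diagonal_mul_diagonal]; simp
    · rw [Matrix.diagonal_map (map_zero _)]
      congr 1; ext i; exact hu i
  · rintro ⟨i, j, hij, c⟩
    obtain ⟨c, rfl⟩ := rho_surj c
    refine ⟨Matrix.transvection i j c, Matrix.transvection i j (-c), ?_, ?_, ?_⟩
    · rw [Matrix.transvection_mul_transvection_same i j hij]; simp
    · rw [Matrix.transvection_mul_transvection_same i j hij]; simp
    · ext a b
      simp only [Matrix.TransvectionStruct.toMatrix, Matrix.transvection, Matrix.map_apply,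
        Matrix.add_apply, map_add, Matrix.one_apply, Matrix.single_apply]
      congr 1 <;> split_ifs <;> simp
  · rintro g h - - ⟨G, G', h1, h2, rfl⟩ ⟨H, H', h3, h4, rfl⟩
    refine ⟨G * H, H' * G', ?_, ?_, ?_⟩
    · rw [Matrix.mul_assoc, ← Matrix.mul_assoc H, h3, Matrix.one_mul, h1]
    · rw [Matrix.mul_assoc, ← Matrix.mul_assoc G', h2, Matrix.one_mul, h4]
    · rw [Matrix.map_mul]

end Horrocks


section Horrocks2

variable {A : Type*} [CommRing A] [IsLocalRing A]

lemma map_comp_mat {R S T : Type*} [CommRing R] [CommRing S] [CommRing T] {m n : Type*}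
    (M : Matrix m n R) (f : R →+* S) (g : S →+* T) : (M.map f).map g = M.map (g.comp f) := by
  ext i j; rfl

lemma map_rho_ii {m n : Type*} (M : Matrix m n A[X]) :
    (M.map (ii A)).map (rho A) = (M.map (red A)).map (jj A) := by
  ext i j; simp [rho_ii]

lemma mat_map_inj {R S : Type*} [CommRing R] [CommRing S] {m n : Type*} {f : R →+* S}
    (hf : Function.Injective f) {M N : Matrix m n R} (h : M.map f = N.map f) : M = N := by
  ext i j
  exact hf (congrFun (congrFun h i) j)

lemma map_one_mat {R S : Type*} [CommRing R] [CommRing S] {m : Type*} [DecidableEq m]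
    (f : R →+* S) : (1 : Matrix m m R).map f = 1 := by simp

lemma good_frame {n : ℕ} (e : Matrix (Fin n) (Fin n) A[X]) (he : e * e = e) (f : A[X])
    (hf : f.Monic) {r : ℕ} (U : Matrix (Fin n) (Fin r) A[X]) (V : Matrix (Fin r) (Fin n) A[X])
    (hUV : U * V = f • e) (hVU : V * U = f • (1 : Matrix (Fin r) (Fin r) A[X])) :
    ∃ (U : Matrix (Fin n) (Fin r) (LL A)) (V : Matrix (Fin r) (Fin n) (LL A))
      (Ub : Matrix (Fin n) (Fin r) (IsLocalRing.ResidueField A)[X])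
      (Vb : Matrix (Fin r) (Fin n) (IsLocalRing.ResidueField A)[X]),
      U * V = e.map (ii A) ∧ V * U = 1 ∧ U.map (rho A) = Ub.map (jj A) ∧
      V.map (rho A) = Vb.map (jj A) ∧ Ub * Vb = e.map (red A) ∧ Vb * Ub = 1 := by
  obtain ⟨u, hu⟩ := ii_unit hf
  set U1 : Matrix (Fin n) (Fin r) (LL A) := U.map (ii A) with hU1
  set V1 : Matrix (Fin r) (Fin n) (LL A) := ((u⁻¹ : (LL A)ˣ) : LL A) • V.map (ii A) with hV1
  have hsm : ∀ {m k : ℕ} (M : Matrix (Fin m) (Fin k) A[X]),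
      (f • M).map (ii A) = (u : LL A) • M.map (ii A) := by
    intro m k M
    ext i j; simp [hu]
  have h1 : U1 * V1 = e.map (ii A) := by
    rw [hU1, hV1, Matrix.mul_smul, ← Matrix.map_mul, hUV, hsm, smul_smul, Units.inv_mul, one_smul]
  have h2 : V1 * U1 = 1 := by
    rw [hU1, hV1, Matrix.smul_mul, ← Matrix.map_mul, hVU, hsm, smul_smul, Units.inv_mul, one_smul,
      map_one_mat]
  obtain ⟨r', Ub, Vb, h3, h4⟩ := QS.of_pid (IsLocalRing.ResidueField A)[X] n (e.map (red A)) (by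
    rw [← Matrix.map_mul, he])
  have h1' : U1.map (rho A) * V1.map (rho A) = (e.map (red A)).map (jj A) := by
    rw [← Matrix.map_mul, h1, map_rho_ii]
  have h2' : V1.map (rho A) * U1.map (rho A) = 1 := by
    rw [← Matrix.map_mul, h2, map_one_mat]
  have h3' : Ub.map (jj A) * Vb.map (jj A) = (e.map (red A)).map (jj A) := by
    rw [← Matrix.map_mul, h3]
  have h4' : Vb.map (jj A) * Ub.map (jj A) = 1 := by
    rw [← Matrix.map_mul, h4, map_one_mat]
  have g1 : (V1.map (rho A) * Ub.map (jj A)) * (Vb.map (jj A) * U1.map (rho A)) = 1 := by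
    calc _ = V1.map (rho A) * (Ub.map (jj A) * Vb.map (jj A)) * U1.map (rho A) := by
          simp only [Matrix.mul_assoc]
      _ = (V1.map (rho A) * U1.map (rho A)) * (V1.map (rho A) * U1.map (rho A)) := by
          rw [h3', ← h1']; simp only [Matrix.mul_assoc]
      _ = 1 := by rw [h2', Matrix.one_mul]
  have g2 : (Vb.map (jj A) * U1.map (rho A)) * (V1.map (rho A) * Ub.map (jj A)) = 1 := by
    calc _ = Vb.map (jj A) * (U1.map (rho A) * V1.map (rho A)) * Ub.map (jj A) := by
          simp only [Matrix.mul_assoc]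
      _ = (Vb.map (jj A) * Ub.map (jj A)) * (Vb.map (jj A) * Ub.map (jj A)) := by
          rw [h1', ← h3']; simp only [Matrix.mul_assoc]
      _ = 1 := by rw [h4', Matrix.one_mul]
  have hr : r = r' := by simpa using Matrix.square_of_invertible _ _ g1 g2
  subst hr
  obtain ⟨G, G', hG1, hG2, hG⟩ := lift_GL (V1.map (rho A) * Ub.map (jj A)) (by
    have := congrArg Matrix.det g1
    rw [Matrix.det_mul, Matrix.det_one] at this
    exact left_ne_zero_of_mul_eq_one this)
  have hG' : G'.map (rho A) = Vb.map (jj A) * U1.map (rho A) := by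
    have h5 : G'.map (rho A) * (V1.map (rho A) * Ub.map (jj A)) = 1 := by
      rw [← hG, ← Matrix.map_mul, hG2, map_one_mat]
    calc G'.map (rho A) = G'.map (rho A) * ((V1.map (rho A) * Ub.map (jj A)) *
          (Vb.map (jj A) * U1.map (rho A))) := by rw [g1, Matrix.mul_one]
      _ = _ := by rw [← Matrix.mul_assoc, h5, Matrix.one_mul]
  refine ⟨U1 * G, G' * V1, Ub, Vb, ?_, ?_, ?_, ?_, h3, h4⟩
  · rw [Matrix.mul_assoc, ← Matrix.mul_assoc G, hG1, Matrix.one_mul, h1]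
  · rw [Matrix.mul_assoc, ← Matrix.mul_assoc V1, h2, Matrix.one_mul, hG2]
  · rw [Matrix.map_mul, hG, ← Matrix.mul_assoc, h1', ← h3', Matrix.mul_assoc, h4', Matrix.mul_one]
  · rw [Matrix.map_mul, hG', Matrix.mul_assoc, h1', ← h3', ← Matrix.mul_assoc, h4', Matrix.one_mul]

lemma common_denom {m n : ℕ} (M : Matrix (Fin m) (Fin n) (LL A)) :
    ∃ (b : A[X]) (N : Matrix (Fin m) (Fin n) A[X]), b.Monic ∧ ii A b • M = N.map (ii A) := by
  obtain ⟨b, hb⟩ := IsLocalization.exist_integer_multiples_of_finite (monics A)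
    (fun p : Fin m × Fin n => M p.1 p.2)
  choose N hN using hb
  refine ⟨b, Matrix.of fun i j => N (i, j), b.2, ?_⟩
  ext i j
  have := hN (i, j)
  rw [Matrix.smul_apply, Matrix.map_apply, Matrix.of_apply, smul_eq_mul, this, Algebra.smul_def]

/-- The submodule `V (A[X]^n) + proper^r`. -/
noncomputable def NN {n r : ℕ} (V : Matrix (Fin r) (Fin n) (LL A)) :
    Submodule A (Fin r → LL A) where
  carrier := {z | ∃ w : Fin n → A[X], ∀ j, z j - V.mulVec (fun i => ii A (w i)) j ∈ proper A}
  zero_mem' := ⟨0, by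
    intro j
    have : (fun i : Fin n => ii A ((0 : Fin n → A[X]) i)) = 0 := by ext; simp
    rw [this]; simp⟩
  add_mem' := by
    rintro z z' ⟨w, hw⟩ ⟨w', hw'⟩
    refine ⟨w + w', fun j => ?_⟩
    have h : (fun i : Fin n => ii A ((w + w') i)) = (fun i => ii A (w i)) + fun i => ii A (w' i) := by
      ext; simp
    rw [h, Matrix.mulVec_add]
    have := add_mem (hw j) (hw' j)
    simp only [Pi.add_apply]
    convert this using 1; ring
  smul_mem' := by
    rintro c z ⟨w, hw⟩
    refine ⟨fun i => C c * w i, fun j => ?_⟩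
    have h : (fun i : Fin n => ii A (C c * w i)) = (ii A (C c)) • fun i => ii A (w i) := by
      ext; simp
    rw [h, Matrix.mulVec_smul]
    have h2 := (proper A).smul_mem c (hw j)
    have h3 : ∀ z : LL A, c • z = ii A (C c) * z := by
      intro z; rw [Algebra.smul_def]; rfl
    rw [h3] at h2
    simp only [Pi.smul_apply, smul_eq_mul]
    rw [h3, ← mul_sub]; exact h2

lemma lift_mat {m n : ℕ} (M : Matrix (Fin m) (Fin n) (IsLocalRing.ResidueField A)[X]) :
    ∃ N : Matrix (Fin m) (Fin n) A[X], N.map (red A) = M := by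
  choose N hN using fun i j => red_surj (M i j)
  exact ⟨N, by ext1 i j; exact hN i j⟩

lemma map_mulVec' {R S : Type*} [CommRing R] [CommRing S] {m n : ℕ} (f : R →+* S)
    (M : Matrix (Fin m) (Fin n) R) (v : Fin n → R) :
    (fun i => f (M.mulVec v i)) = (M.map f).mulVec (fun i => f (v i)) := by
  ext i
  exact RingHom.map_mulVec f M v i

lemma step_W {n r : ℕ} (U : Matrix (Fin n) (Fin r) (LL A)) (V : Matrix (Fin r) (Fin n) (LL A))
    (Ub : Matrix (Fin n) (Fin r) (IsLocalRing.ResidueField A)[X])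
    (Vb : Matrix (Fin r) (Fin n) (IsLocalRing.ResidueField A)[X])
    (h2 : V * U = 1) (h4 : V.map (rho A) = Vb.map (jj A)) (h6 : Vb * Ub = 1) :
    ∃ W : Matrix (Fin n) (Fin r) A[X], 
      ∀ i j, (1 - V * W.map (ii A) : Matrix (Fin r) (Fin r) (LL A)) i j ∈ proper A := by
  classical
  let F : Submodule A[X] (Fin r → LL A) :=
    LinearMap.range (LinearMap.compLeft (Algebra.linearMap A[X] (LL A)) (Fin r))
  obtain ⟨b, Ut, hb, hUt⟩ := common_denom U
  obtain ⟨U1, hU1⟩ := lift_mat Ub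
  have key : F.restrictScalars A ≤ NN V := by
    refine nak b hb F ?_ (NN V) ?_ ?_
    · change (LinearMap.range _).FG
      rw [LinearMap.range_eq_map]
      exact (Module.Finite.fg_top (R := A[X]) (M := Fin r → A[X])).map _
    · rintro _ ⟨y, rfl⟩
      refine ⟨Ut.mulVec y, fun j => ?_⟩
      rw [map_mulVec', ← hUt, Matrix.smul_mulVec, Matrix.mulVec_smul, Matrix.mulVec_mulVec, h2,
        Matrix.one_mulVec]
      convert (proper A).zero_mem
      simp [Algebra.smul_def]
    · rintro _ ⟨y, rfl⟩
      set z : Fin r → LL A := fun i => ii A (y i) with hz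
      have hzF : z ∈ F := ⟨y, rfl⟩
      change z ∈ _
      have hd : ∀ δ : Fin r → LL A, (∀ j, rho A (δ j) = 0) →
          δ ∈ NN V ⊔ IsLocalRing.maximalIdeal A • F.restrictScalars A := by
        intro δ hδ
        rw [← Finset.univ_sum_single δ]
        refine Submodule.sum_mem _ fun j _ => ?_
        refine Submodule.smul_induction_on (mem_smul_of_rho (hδ j)) ?_ ?_
        · intro c hc z' _
          obtain ⟨g, hg⟩ := proper_decomp z'
          have : (Pi.single j (c • z') : Fin r → LL A)
              = c • (Pi.single j (z' - ii A g) : Fin r → LL A)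
                + c • (Pi.single j (ii A g) : Fin r → LL A) := by
            rw [← smul_add, ← Pi.single_add, sub_add_cancel, Pi.single_smul]
          rw [this]
          refine Submodule.add_mem _ (Submodule.mem_sup_left (Submodule.smul_mem _ _ ?_))
            (Submodule.mem_sup_right (Submodule.smul_mem_smul hc ?_))
          · refine ⟨0, fun i => ?_⟩
            have h0 : (fun i : Fin n => ii A ((0 : Fin n → A[X]) i)) = 0 := by ext; simp
            rw [h0, Matrix.mulVec_zero, Pi.zero_apply, sub_zero]
            by_cases hij : i = j
            · subst hij; simpa using hg
            · simp [hij]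
          · refine ⟨Pi.single j g, ?_⟩
            ext i
            by_cases hij : i = j
            · subst hij; simp
            · simp [hij]
        · intro x y hx hy
          rw [Pi.single_add]; exact Submodule.add_mem _ hx hy
      have hsplit : z = V.mulVec (fun i => ii A (U1.mulVec y i)) +
          (z - V.mulVec (fun i => ii A (U1.mulVec y i))) := by abel
      rw [hsplit]
      refine Submodule.add_mem _ (Submodule.mem_sup_left ⟨U1.mulVec y, fun j => by simp⟩) (hd _ ?_)
      intro j
      have e1 : (fun i => rho A (V.mulVec (fun i => ii A (U1.mulVec y i)) i))
          = fun i => jj A (red A (y i)) := by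
        rw [map_mulVec', h4]
        have : (fun i => rho A (ii A (U1.mulVec y i)))
            = (Ub.map (jj A)).mulVec (fun i => jj A (red A (y i))) := by
          rw [← map_mulVec']
          ext i
          rw [rho_ii]
          congr 1
          rw [← hU1, ← map_mulVec']
        rw [this, Matrix.mulVec_mulVec, ← Matrix.map_mul, h6, map_one_mat, Matrix.one_mulVec]
      have e2 := congrFun e1 j
      rw [Pi.sub_apply, map_sub, e2, hz]
      simp only [rho_ii, sub_self]
  have h7 : ∀ j, (Pi.single j 1 : Fin r → LL A) ∈ NN V := by
    intro j
    refine key ⟨Pi.single j 1, ?_⟩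
    ext i
    by_cases hij : i = j
    · subst hij; simp
    · simp [hij]
  choose w hw using h7
  refine ⟨Matrix.of fun a j => w j a, fun i j => ?_⟩
  have := hw j i
  convert this using 1
  rw [Matrix.sub_apply]
  congr 1
  rw [Matrix.one_apply, Pi.single_apply]

theorem local_horrocks {n : ℕ} (e : Matrix (Fin n) (Fin n) A[X]) (he : e * e = e) (f : A[X])
    (hf : f.Monic) {r : ℕ} (U : Matrix (Fin n) (Fin r) A[X]) (V : Matrix (Fin r) (Fin n) A[X])
    (hUV : U * V = f • e) (hVU : V * U = f • (1 : Matrix (Fin r) (Fin r) A[X])) :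
    SplitsFree e := by
  classical
  obtain ⟨U, V, Ub, Vb, h1, h2, h3, h4, h5, h6⟩ := good_frame e he f hf U V hUV hVU
  obtain ⟨W, hW⟩ := step_W U V Ub Vb h2 h4 h6
  have hVW : Vb * W.map (red A) = 1 := by
    have h7 : 1 - Vb * W.map (red A) = 0 := by
      ext1 i j
      refine proper_poly (hW i j) _ ?_
      have : (1 - V * W.map (ii A)).map (rho A) = (1 - Vb * W.map (red A)).map (jj A) := by
        rw [Matrix.map_sub _ (map_sub _), Matrix.map_sub _ (map_sub _), Matrix.map_mul,
          Matrix.map_mul, map_one_mat, map_one_mat, h4, map_rho_ii]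
      exact congrFun (congrFun this i) j
    exact (sub_eq_zero.1 h7).symm
  have hD := det_unit _ hW
  rw [sub_sub_cancel] at hD
  set D := V * W.map (ii A) with hDdef
  have hDu : IsUnit D := (Matrix.isUnit_iff_isUnit_det D).2 hD
  obtain ⟨D', hD1, hD2⟩ := hDu.exists_right_inv.elim fun D' h => (⟨D', h,
    mul_eq_one_comm.1 h⟩ : ∃ D', D * D' = 1 ∧ D' * D = 1)
  set U' := e * W with hU'
  have a1 : U'.map (ii A) = U * D := by
    rw [hU', Matrix.map_mul, ← h1, hDdef, Matrix.mul_assoc]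
  have a2 : U'.map (ii A) * (D' * V) = e.map (ii A) := by
    rw [a1, Matrix.mul_assoc, ← Matrix.mul_assoc D, hD1, Matrix.one_mul, h1]
  have a3 : (D' * V) * U'.map (ii A) = 1 := by
    rw [a1, Matrix.mul_assoc, ← Matrix.mul_assoc V, h2, Matrix.one_mul, hD2]
  have a4 : U'.map (red A) = Ub := by
    rw [hU', Matrix.map_mul, ← h5, Matrix.mul_assoc, hVW, Matrix.mul_one]
  have a5 : e * U' = U' := by rw [hU', ← Matrix.mul_assoc, he]
  obtain ⟨b, Vt, hb, hVt⟩ := common_denom (D' * V)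
  obtain ⟨Vl, hVl⟩ := lift_mat Vb
  let F : Submodule A[X] (Fin n → A[X]) := LinearMap.range e.mulVecLin
  let N : Submodule A[X] (Fin n → A[X]) := LinearMap.range U'.mulVecLin
  have key : F.restrictScalars A ≤ N.restrictScalars A := by
    refine nak b hb F ?_ _ ?_ ?_
    · change (LinearMap.range _).FG
      rw [LinearMap.range_eq_map]
      exact (Module.Finite.fg_top (R := A[X]) (M := Fin n → A[X])).map _
    · rintro _ ⟨y, rfl⟩
      refine ⟨Vt.mulVec y, ?_⟩
      have : U' * Vt = b • e := by
        apply mat_map_inj ii_inj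
        rw [Matrix.map_mul, ← hVt, Matrix.mul_smul, a2]
        ext i j; simp
      simp only [Matrix.mulVecLin_apply, Matrix.mulVec_mulVec, this, Matrix.smul_mulVec]
    · rintro _ ⟨y, rfl⟩
      rw [Matrix.mulVecLin_apply]
      have e0 : e - U' * Vl = e * (e - U' * Vl) := by
        rw [Matrix.mul_sub, he, ← Matrix.mul_assoc, a5]
      have e1 : e.mulVec y = U'.mulVec (Vl.mulVec y) + e.mulVec ((e - U' * Vl).mulVec y) := by
        rw [Matrix.mulVec_mulVec, Matrix.mulVec_mulVec, ← e0, ← Matrix.add_mulVec]; simp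
      rw [e1]
      refine Submodule.add_mem _ (Submodule.mem_sup_left ⟨Vl.mulVec y, rfl⟩)
        (Submodule.mem_sup_right ?_)
      have e2 : (e - U' * Vl).map (red A) = 0 := by
        rw [Matrix.map_sub _ (map_sub _), Matrix.map_mul, a4, hVl, h5, sub_self]
      have e3 : ∀ j, red A ((e - U' * Vl).mulVec y j) = 0 := by
        intro j
        have := congrFun (map_mulVec' (red A) (e - U' * Vl) y) j
        rw [e2, Matrix.zero_mulVec] at this
        exact this
      generalize (e - U' * Vl).mulVec y = δ at e3
      rw [← Finset.univ_sum_single δ, Matrix.mulVec_sum]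
      refine Submodule.sum_mem _ fun j _ => ?_
      have e5 : (Pi.single j (δ j) : Fin n → A[X]) = ∑ l ∈ Finset.range ((δ j).natDegree + 1),
          Pi.single j (monomial l ((δ j).coeff l)) := by
        conv_lhs => rw [(δ j).as_sum_range]
        exact map_sum (AddMonoidHom.single (fun _ : Fin n => A[X]) j) _ _
      rw [e5, Matrix.mulVec_sum]
      refine Submodule.sum_mem _ fun l _ => ?_
      have e4 : (Pi.single j (monomial l ((δ j).coeff l)) : Fin n → A[X])
          = (δ j).coeff l • Pi.single j (X ^ l) := by
        rw [← Pi.single_smul, ← C_mul_X_pow_eq_monomial, smul_eq_C_mul]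
      rw [e4, Matrix.mulVec_smul]
      exact Submodule.smul_mem_smul (coeff_mem_of_red (e3 j) l) ⟨_, rfl⟩
  have h7 : ∀ j, ∃ v : Fin r → A[X], U'.mulVec v = e.mulVec (Pi.single j 1) := fun j =>
    key ⟨Pi.single j 1, rfl⟩
  choose v hv using h7
  have h8 : U' * Matrix.of (fun a j => v j a) = e := by
    ext1 i j
    have := congrFun (hv j) i
    rw [Matrix.mulVec_single_one] at this
    exact this
  refine ⟨r, U', Matrix.of (fun a j => v j a), h8, ?_⟩
  apply mat_map_inj ii_inj
  rw [Matrix.map_mul, map_one_mat]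
  have h9 : (Matrix.of (fun a j => v j a)).map (ii A) = D' * V := by
    calc _ = ((D' * V) * U'.map (ii A)) * (Matrix.of (fun a j => v j a)).map (ii A) := by
          rw [a3, Matrix.one_mul]
      _ = (D' * V) * (U'.map (ii A) * (D' * V)) := by
          rw [Matrix.mul_assoc, ← Matrix.map_mul, h8, a2]
      _ = _ := by rw [← Matrix.mul_assoc, a3, Matrix.one_mul]
  rw [h9, a3]

end Horrocks2


section Patching

/-- `X ↦ X + s Y` -/
noncomputable def tau {A : Type*} [CommRing A] (s : A) : A[X] →+* A[X][X] :=
  eval₂RingHom (C.comp C) (C X + C (C s) * X)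

/-- `X ↦ X + s Y, Y ↦ Y` -/
noncomputable def theta {A : Type*} [CommRing A] (s : A) : A[X][X] →+* A[X][X] :=
  eval₂RingHom (tau s) X

/-- `Y ↦ s Y` -/
noncomputable def sig {A : Type*} [CommRing A] (s : A) : A[X][X] →+* A[X][X] :=
  eval₂RingHom C (C (C s) * X)

/-- `X ↦ 0, Y ↦ X` -/
noncomputable def fin0 (A : Type*) [CommRing A] : A[X][X] →+* A[X] :=
  eval₂RingHom (C.comp (evalRingHom 0)) X

variable {A : Type*} [CommRing A]

lemma theta_C (s : A) : (theta s).comp C = tau s := by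
  ext <;> simp [theta]

lemma theta_tau (s t : A) : (theta s).comp (tau t) = tau (s + t) := by
  refine Polynomial.ringHom_ext (fun a => ?_) ?_
  · simp [theta, tau]
  · simp [theta, tau]
    ring

lemma sig_C (s : A) : (sig s).comp C = C := by
  ext <;> simp [sig]

lemma sig_tau (s t : A) : (sig s).comp (tau t) = tau (s * t) := by
  refine Polynomial.ringHom_ext (fun a => ?_) ?_
  · simp [sig, tau]
  · simp [sig, tau]
    ring

lemma tau_zero : tau (0 : A) = C := by
  ext <;> simp [tau]

lemma fin0_tau : (fin0 A).comp (tau 1) = RingHom.id _ := by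
  ext <;> simp [fin0, tau]

lemma fin0_C : (fin0 A).comp C = C.comp (evalRingHom 0) := by
  ext <;> simp [fin0]

/-- The patching ideal -/
noncomputable def JJ {n : ℕ} (e : Matrix (Fin n) (Fin n) A[X]) (he : e * e = e) : Ideal A where
  carrier := {s | ∃ W W' : Matrix (Fin n) (Fin n) A[X][X],
    W * W' = e.map (tau s) ∧ W' * W = e.map C}
  zero_mem' := by
    refine ⟨e.map C, e.map C, ?_, ?_⟩
    · rw [← Matrix.map_mul, he, tau_zero]
    · rw [← Matrix.map_mul, he]
  add_mem' := by
    rintro s t ⟨W, W', h1, h2⟩ ⟨Z, Z', h3, h4⟩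
    have h3' : Z.map (theta s) * Z'.map (theta s) = e.map (tau (s + t)) := by
      rw [← Matrix.map_mul, h3, map_comp_mat, theta_tau]
    have h4' : Z'.map (theta s) * Z.map (theta s) = e.map (tau s) := by
      rw [← Matrix.map_mul, h4, map_comp_mat, theta_C]
    refine ⟨Z.map (theta s) * W, W' * Z'.map (theta s), ?_, ?_⟩
    · calc _ = Z.map (theta s) * (W * W') * Z'.map (theta s) := by simp only [Matrix.mul_assoc]
        _ = (Z.map (theta s) * Z'.map (theta s)) * (Z.map (theta s) * Z'.map (theta s)) := by
            rw [h1, ← h4']; simp only [Matrix.mul_assoc]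
        _ = _ := by rw [h3', ← Matrix.map_mul, he]
    · calc _ = W' * (Z'.map (theta s) * Z.map (theta s)) * W := by simp only [Matrix.mul_assoc]
        _ = (W' * W) * (W' * W) := by
            rw [h4', ← h1]; simp only [Matrix.mul_assoc]
        _ = _ := by rw [h2, ← Matrix.map_mul, he]
  smul_mem' := by
    rintro c s ⟨W, W', h1, h2⟩
    refine ⟨W.map (sig c), W'.map (sig c), ?_, ?_⟩
    · rw [← Matrix.map_mul, h1, map_comp_mat, sig_tau, smul_eq_mul]
    · rw [← Matrix.map_mul, h2, map_comp_mat, sig_C]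

/-- base change in both variables -/
noncomputable def eta (A B : Type*) [CommRing A] [CommRing B] [Algebra A B] :
    A[X][X] →+* B[X][X] := mapRingHom (mapRingHom (algebraMap A B))

lemma clear1 {B : Type*} [CommRing B] [Algebra A B] (m : Submonoid A)
    [IsLocalization m B] (q : B[X][X]) :
    ∃ s ∈ m, ∀ t, s ∣ t → ∃ p : A[X][X], eta A B p = C (C (algebraMap A B t)) *
      sig (algebraMap A B t) q := by
  induction q using Polynomial.induction_on' with
  | add q1 q2 h1 h2 =>
    obtain ⟨s1, hs1, h1⟩ := h1
    obtain ⟨s2, hs2, h2⟩ := h2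
    refine ⟨s1 * s2, mul_mem hs1 hs2, fun t ht => ?_⟩
    obtain ⟨p1, hp1⟩ := h1 t ((dvd_mul_right _ _).trans ht)
    obtain ⟨p2, hp2⟩ := h2 t ((dvd_mul_left _ _).trans ht)
    refine ⟨p1 + p2, ?_⟩
    rw [map_add, map_add, hp1, hp2, mul_add]
  | monomial j a =>
    induction a using Polynomial.induction_on' with
    | add q1 q2 h1 h2 =>
      obtain ⟨s1, hs1, h1⟩ := h1
      obtain ⟨s2, hs2, h2⟩ := h2
      refine ⟨s1 * s2, mul_mem hs1 hs2, fun t ht => ?_⟩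
      obtain ⟨p1, hp1⟩ := h1 t ((dvd_mul_right _ _).trans ht)
      obtain ⟨p2, hp2⟩ := h2 t ((dvd_mul_left _ _).trans ht)
      refine ⟨p1 + p2, ?_⟩
      rw [map_add, map_add, map_add, hp1, hp2, mul_add]
    | monomial i c =>
      obtain ⟨⟨b, s⟩, hb⟩ := IsLocalization.surj m c
      refine ⟨s, s.2, ?_⟩
      rintro _ ⟨d, rfl⟩
      refine ⟨C (C (b * d)) * C X ^ i * (C (C (s * d)) * X) ^ j, ?_⟩
      simp only at hb
      rw [← C_mul_X_pow_eq_monomial, ← C_mul_X_pow_eq_monomial]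
      simp only [eta, sig, map_mul, map_pow, coe_mapRingHom, map_C, map_X, coe_eval₂RingHom,
        eval₂_mul, eval₂_C, eval₂_X, eval₂_pow, ← hb]
      ring

lemma clear2 {B : Type*} [CommRing B] [Algebra A B] (m : Submonoid A)
    [IsLocalization m B] (q : B[X][X]) (a : A[X])
    (ha : q.coeff 0 = mapRingHom (algebraMap A B) a) :
    ∃ s ∈ m, ∀ t, s ∣ t → ∃ p : A[X][X], eta A B p = sig (algebraMap A B t) q := by
  obtain ⟨s, hs, h⟩ := clear1 m q.divX
  refine ⟨s, hs, fun t ht => ?_⟩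
  obtain ⟨p, hp⟩ := h t ht
  refine ⟨C a + p * X, ?_⟩
  conv_rhs => rw [← divX_mul_X_add q]
  rw [map_add, map_mul, hp, map_add, map_mul]
  have h1 : sig (algebraMap A B t) X = C (C (algebraMap A B t)) * X := by simp [sig]
  have h2 : sig (algebraMap A B t) (C (q.coeff 0)) = C (q.coeff 0) := by simp [sig]
  rw [h1, h2, ha]
  simp [eta]
  ring

lemma clear_mat {B : Type*} [CommRing B] [Algebra A B] (m : Submonoid A)
    [IsLocalization m B] {n : ℕ} (W : Matrix (Fin n) (Fin n) B[X][X])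
    (e : Matrix (Fin n) (Fin n) A[X])
    (hW : ∀ i j, (W i j).coeff 0 = mapRingHom (algebraMap A B) (e i j)) :
    ∃ s ∈ m, ∀ t, s ∣ t → ∃ W' : Matrix (Fin n) (Fin n) A[X][X],
      W'.map (eta A B) = W.map (sig (algebraMap A B t)) := by
  choose s hs h using fun p : Fin n × Fin n => clear2 m (W p.1 p.2) (e p.1 p.2) (hW p.1 p.2)
  refine ⟨∏ p, s p, Submonoid.prod_mem _ fun p _ => hs p, fun t ht => ?_⟩
  choose p hp using fun i => h i t ((Finset.dvd_prod_of_mem s (Finset.mem_univ i)).trans ht)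
  refine ⟨Matrix.of fun i j => p (i, j), ?_⟩
  ext1 i j
  exact hp (i, j)

lemma eta_tau {B : Type*} [CommRing B] [Algebra A B] (s : A) :
    (eta A B).comp (tau s) = (tau (algebraMap A B s)).comp (mapRingHom (algebraMap A B)) := by
  ext <;> simp [eta, tau]

lemma eta_C {B : Type*} [CommRing B] [Algebra A B] :
    (eta A B).comp C = C.comp (mapRingHom (algebraMap A B)) := by
  ext <;> simp [eta]

lemma coeff0_tau (s : A) : (evalRingHom 0).comp (tau s) = RingHom.id _ := by
  ext <;> simp [tau]

lemma coeff0_C : (evalRingHom (0 : A[X])).comp C = RingHom.id _ := by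
  ext <;> simp

theorem affine_horrocks [IsDomain A] {n : ℕ} (e : Matrix (Fin n) (Fin n) A[X]) (he : e * e = e)
    (f : A[X]) (hf : f.Monic) {r : ℕ} (U : Matrix (Fin n) (Fin r) A[X])
    (V : Matrix (Fin r) (Fin n) A[X])
    (hUV : U * V = f • e) (hVU : V * U = f • (1 : Matrix (Fin r) (Fin r) A[X])) :
    ∃ W W' : Matrix (Fin n) (Fin n) A[X], W * W' = e ∧
      W' * W = (e.map (evalRingHom (0 : A))).map C := by
  have hJ : JJ e he = ⊤ := by
    by_contra hne
    obtain ⟨m, hm, hle⟩ := Ideal.exists_le_maximal _ hne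
    let B := Localization.AtPrime m
    let α : A[X] →+* B[X] := mapRingHom (algebraMap A B)
    have hα : Function.Injective (algebraMap A B) :=
      IsLocalization.injective B m.primeCompl_le_nonZeroDivisors
    have heta : Function.Injective (eta A B) := map_injective _ (map_injective _ hα)
    have hsm : ∀ {p q : ℕ} (M : Matrix (Fin p) (Fin q) A[X]),
        (f • M).map α = α f • M.map α := by
      intro p q M
      ext1 i j; simp
    obtain ⟨r', U0, V0, h1, h2⟩ := local_horrocks (e.map α) (by rw [← Matrix.map_mul, he]) (α f)
      (hf.map _) (U.map α) (V.map α) (by rw [← Matrix.map_mul, hUV, hsm])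
      (by rw [← Matrix.map_mul, hVU, hsm, map_one_mat])
    have c1 : U0.map (tau (1 : B)) * V0.map (tau (1 : B)) = (e.map α).map (tau (1 : B)) := by
      rw [← Matrix.map_mul, h1]
    have c2 : V0.map (tau (1 : B)) * U0.map (tau (1 : B)) = 1 := by
      rw [← Matrix.map_mul, h2, map_one_mat]
    have c3 : U0.map C * V0.map C = (e.map α).map C := by
      rw [← Matrix.map_mul, h1]
    have c4 : V0.map C * U0.map C = (1 : Matrix (Fin r') (Fin r') B[X][X]) := by
      rw [← Matrix.map_mul, h2, map_one_mat]
    set W0 := U0.map (tau (1 : B)) * V0.map C with hW0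
    set W0' := U0.map C * V0.map (tau (1 : B)) with hW0'
    have d1 : W0 * W0' = (e.map α).map (tau (1 : B)) := by
      rw [hW0, hW0', Matrix.mul_assoc, ← Matrix.mul_assoc (V0.map C), c4, Matrix.one_mul, c1]
    have d2 : W0' * W0 = (e.map α).map C := by
      rw [hW0, hW0', Matrix.mul_assoc, ← Matrix.mul_assoc (V0.map (tau (1 : B))), c2,
        Matrix.one_mul, c3]
    have id_map : ∀ {p q : ℕ} (M : Matrix (Fin p) (Fin q) B[X]),
        M.map (RingHom.id B[X]) = M := by
      intro p q M; ext1 i j; rfl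
    have d3 : W0.map (evalRingHom 0) = e.map α := by
      rw [hW0, Matrix.map_mul, map_comp_mat, map_comp_mat, coeff0_tau, coeff0_C, id_map, id_map, h1]
    have d4 : W0'.map (evalRingHom 0) = e.map α := by
      rw [hW0', Matrix.map_mul, map_comp_mat, map_comp_mat, coeff0_tau, coeff0_C, id_map, id_map,
        h1]
    obtain ⟨s, hs, hW⟩ := clear_mat m.primeCompl W0 e (fun i j => by
      rw [coeff_zero_eq_eval_zero]; exact congrFun (congrFun d3 i) j)
    obtain ⟨s', hs', hW'⟩ := clear_mat m.primeCompl W0' e (fun i j => by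
      rw [coeff_zero_eq_eval_zero]; exact congrFun (congrFun d4 i) j)
    obtain ⟨Z, hZ⟩ := hW (s * s') (dvd_mul_right _ _)
    obtain ⟨Z', hZ'⟩ := hW' (s * s') (dvd_mul_left _ _)
    have hmem : s * s' ∈ JJ e he := by
      refine ⟨Z, Z', ?_, ?_⟩
      · apply mat_map_inj heta
        rw [Matrix.map_mul, hZ, hZ', ← Matrix.map_mul, d1, map_comp_mat, map_comp_mat,
          map_comp_mat, eta_tau, sig_tau, mul_one]
      · apply mat_map_inj heta
        rw [Matrix.map_mul, hZ, hZ', ← Matrix.map_mul, d2, map_comp_mat, map_comp_mat,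
          map_comp_mat, eta_C, sig_C]
    exact (mul_mem hs hs' : s * s' ∈ m.primeCompl) (hle hmem)
  obtain ⟨W, W', h1, h2⟩ : (1 : A) ∈ JJ e he := by rw [hJ]; trivial
  refine ⟨W.map (fin0 A), W'.map (fin0 A), ?_, ?_⟩
  · rw [← Matrix.map_mul, h1, map_comp_mat, fin0_tau]; ext1 i j; rfl
  · rw [← Matrix.map_mul, h2, map_comp_mat, fin0_C, map_comp_mat]

theorem free_of_monic [IsDomain A] (hA : QS A) {n : ℕ} (e : Matrix (Fin n) (Fin n) A[X])
    (he : e * e = e) (f : A[X]) (hf : f.Monic) {r : ℕ} (U : Matrix (Fin n) (Fin r) A[X])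
    (V : Matrix (Fin r) (Fin n) A[X])
    (hUV : U * V = f • e) (hVU : V * U = f • (1 : Matrix (Fin r) (Fin r) A[X])) :
    SplitsFree e := by
  obtain ⟨W, W', h1, h2⟩ := affine_horrocks e he f hf U V hUV hVU
  refine SplitsFree.trans ((hA n (e.map (evalRingHom (0 : A))) ?_).map C) he W W' h1 h2
  rw [← Matrix.map_mul, he]

/-- the same for arbitrary finite index types -/
theorem free_of_monic' [IsDomain A] (hA : QS A) {ι : Type*} [Fintype ι] (e : Matrix ι ι A[X])
    (he : e * e = e) (f : A[X]) (hf : f.Monic) {r : ℕ} (U : Matrix ι (Fin r) A[X])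
    (V : Matrix (Fin r) ι A[X])
    (hUV : U * V = f • e) (hVU : V * U = f • (1 : Matrix (Fin r) (Fin r) A[X])) :
    SplitsFree e := by
  classical
  let σ := Fintype.equivFin ι
  have h := free_of_monic hA (e.submatrix σ.symm σ.symm) (by
    rw [Matrix.submatrix_mul_equiv, he]) f hf (U.submatrix σ.symm id) (V.submatrix id σ.symm)
    (by rw [← Matrix.submatrix_mul _ _ _ _ _ Function.bijective_id, hUV]; rfl)
    (by rw [Matrix.submatrix_mul_equiv, hVU]; simp)
  obtain ⟨r, U, V, h1, h2⟩ := h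
  refine ⟨r, U.submatrix σ id, V.submatrix id σ, ?_, ?_⟩
  · rw [← Matrix.submatrix_mul _ _ _ _ _ Function.bijective_id, h1]
    ext i j; simp
  · rw [Matrix.submatrix_mul_equiv, h2]; simp

end Patching


section Steps

variable {k A B : Type*} [Field k] [CommRing A] [IsDomain A] [Algebra k A] [CommRing B]

lemma clear_denoms (φ : A[X] →+* B)
    (hclear : ∀ b : B, ∃ f : k[X], f.Monic ∧ ∃ p : A[X],
      φ p = φ (mapRingHom (algebraMap k A) f) * b)
    {ι κ : Type*} [Fintype ι] [Fintype κ] (M : Matrix ι κ B) :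
    ∃ f : k[X], f.Monic ∧ ∃ M' : Matrix ι κ A[X],
      M'.map φ = φ (mapRingHom (algebraMap k A) f) • M := by
  classical
  choose f hf p hp using fun q : ι × κ => hclear (M q.1 q.2)
  refine ⟨∏ q, f q, monic_prod_of_monic _ _ fun q _ => hf q,
    Matrix.of fun i j => mapRingHom (algebraMap k A) (∏ q ∈ Finset.univ.erase (i, j), f q) *
      p (i, j), ?_⟩
  ext1 i j
  have h := Finset.mul_prod_erase Finset.univ f (Finset.mem_univ (i, j))
  simp only [Matrix.map_apply, Matrix.of_apply, Matrix.smul_apply, smul_eq_mul]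
  rw [← h, map_mul φ, hp, map_mul (mapRingHom _), map_mul φ]
  ring

lemma map_smul_mat {R S ι κ : Type*} [CommRing R] [CommRing S] (φ : R →+* S) (c : R)
    (M : Matrix ι κ R) : (c • M).map φ = φ c • M.map φ := by
  ext1 i j; simp

theorem poly_step (hA : QS A) (hB : QS B) (φ : A[X] →+* B) (hφ : Function.Injective φ)
    (hclear : ∀ b : B, ∃ f : k[X], f.Monic ∧ ∃ p : A[X],
      φ p = φ (mapRingHom (algebraMap k A) f) * b) : QS A[X] := by
  intro n e he
  obtain ⟨r, U, V, h1, h2⟩ := hB n (e.map φ) (by rw [← Matrix.map_mul, he])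
  obtain ⟨g, hg, U', hU'⟩ := clear_denoms φ hclear U
  obtain ⟨h, hh, V', hV'⟩ := clear_denoms φ hclear V
  refine free_of_monic hA e he (mapRingHom (algebraMap k A) (g * h)) ((hg.mul hh).map _) U' V' ?_ ?_
  · apply mat_map_inj hφ
    rw [Matrix.map_mul, hU', hV', map_smul_mat, Matrix.smul_mul, Matrix.mul_smul, h1, smul_smul,
      map_mul (mapRingHom _), map_mul φ]
  · apply mat_map_inj hφ
    rw [Matrix.map_mul, hU', hV', map_smul_mat, Matrix.smul_mul, Matrix.mul_smul, h2, smul_smul,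
      map_mul (mapRingHom _), map_mul φ, map_one_mat, mul_comm]

lemma smul_mat_inj {R ι κ : Type*} [CommRing R] [IsDomain R] {c : R} (hc : c ≠ 0)
    {M N : Matrix ι κ R} (h : c • M = c • N) : M = N := by
  ext1 i j
  exact mul_left_cancel₀ hc (congrFun (congrFun h i) j)

set_option maxHeartbeats 1000000 in
theorem laurent_step (hA : QS A) (hB : QS B) (φ : A[X] →+* B) (hφ : Function.Injective φ)
    (hclear : ∀ b : B, ∃ f : k[X], f.Monic ∧ ∃ p : A[X],
      φ p = φ (mapRingHom (algebraMap k A) f) * b) (hX : IsUnit (φ X))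
    (R : Type*) [CommRing R] [IsDomain R] [Algebra A[X] R]
    [IsLocalization.Away (X : A[X]) R] : QS R := by
  intro n e he
  set ψ := algebraMap A[X] R with hψ
  have hψi : Function.Injective ψ := IsLocalization.injective R
    (powers_le_nonZeroDivisors_of_noZeroDivisors (X_ne_zero))
  obtain ⟨J, e1, he1⟩ : ∃ (J : ℕ) (e1 : Matrix (Fin n) (Fin n) A[X]), e1.map ψ = ψ X ^ J • e := by
    obtain ⟨⟨_, J, rfl⟩, hb⟩ := IsLocalization.exist_integer_multiples_of_finite
      (Submonoid.powers (X : A[X])) (fun q : Fin n × Fin n => e q.1 q.2)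
    choose p hp using hb
    refine ⟨J, Matrix.of fun i j => p (i, j), ?_⟩
    ext1 i j
    have := hp (i, j)
    simp only [Algebra.smul_def, map_pow] at this
    simpa using this
  let φR : R →+* B := IsLocalization.Away.lift (X : A[X]) hX
  have hφR : φR.comp ψ = φ := IsLocalization.Away.lift_comp (X : A[X]) hX
  obtain ⟨r, U, V, h1, h2⟩ := hB n (e.map φR) (by rw [← Matrix.map_mul, he])
  have he1B : e1.map φ = φ X ^ J • e.map φR := by
    rw [← hφR, ← map_comp_mat, he1, map_smul_mat, map_pow]; rfl
  obtain ⟨g, hg, U', hU'⟩ := clear_denoms φ hclear U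
  obtain ⟨h, hh, V', hV'⟩ := clear_denoms φ hclear V
  set m := mapRingHom (algebraMap k A) with hm
  have k1 : (X : A[X]) ^ J • (U' * V') = m (g * h) • e1 := by
    apply mat_map_inj hφ
    rw [map_smul_mat, map_smul_mat, Matrix.map_mul, hU', hV', Matrix.smul_mul, Matrix.mul_smul, h1,
      he1B, smul_smul, smul_smul, smul_smul, map_mul m, map_mul φ, map_pow]
    congr 1; ring
  have k2 : V' * U' = m (g * h) • (1 : Matrix (Fin r) (Fin r) A[X]) := by
    apply mat_map_inj hφ
    rw [Matrix.map_mul, hU', hV', map_smul_mat, Matrix.smul_mul, Matrix.mul_smul, h2, smul_smul,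
      map_mul m, map_mul φ, map_one_mat, mul_comm]
  have hF := hg.mul hh
  obtain ⟨f0, hf0, hnd⟩ := exists_eq_pow_rootMultiplicity_mul_and_not_dvd (g * h) hF.ne_zero 0
  set j := rootMultiplicity 0 (g * h)
  rw [C_0, sub_zero] at hf0 hnd
  have hf0m : f0.Monic := (monic_X_pow j).of_mul_monic_left (hf0 ▸ hF)
  have hcop : IsCoprime ((X : k[X]) ^ (j + J)) f0 :=
    (((irreducible_X).coprime_iff_not_dvd).2 hnd).pow_left
  obtain ⟨a0, b0, hab⟩ := hcop
  set f := m f0 with hf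
  set a := m a0
  set b := m b0
  have hfm : f.Monic := hf0m.map _
  have hab' : a * X ^ (j + J) + b * f = 1 := by
    have := congrArg m hab
    simpa [m, a, b, f] using this
  have hmF : m (g * h) = X ^ j * f := by rw [hf0]; simp [m, f]
  rw [hmF] at k1 k2
  set S : A[X] := a * X ^ (j + J) with hS
  have hbf : b * f = 1 - S := by rw [← hab']; ring
  clear_value S f a b
  let E : Matrix (Fin n ⊕ Fin r) (Fin n ⊕ Fin r) A[X] :=
    Matrix.fromBlocks ((S * X ^ j * a * (2 - S ^ 2)) • e1) ((S * (2 - S ^ 2) * (1 - S ^ 2)) • U')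
      ((X ^ J * a * b * (1 + S)) • V') ((1 - S ^ 2) ^ 2 • 1)
  let U2 : Matrix (Fin n ⊕ Fin r) (Fin r) A[X] :=
    Matrix.fromRows ((S * (2 - S ^ 2)) • U') ((1 - S ^ 2) • 1)
  let V2 : Matrix (Fin r) (Fin n ⊕ Fin r) A[X] :=
    Matrix.fromCols ((X ^ J * a) • V') ((f * (1 - S ^ 2)) • 1)
  have hUV2 : U2 * V2 = f • E := by
    simp only [U2, V2, E, Matrix.fromRows_mul_fromCols, Matrix.fromBlocks_smul, Matrix.smul_mul,
      Matrix.mul_smul, smul_smul, Matrix.mul_one, Matrix.one_mul]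
    congr 1
    · rw [show X ^ J * a * (S * (2 - S ^ 2)) = (S * (2 - S ^ 2) * a) * X ^ J by ring, mul_smul, k1,
        smul_smul]
      congr 1; ring
    · congr 1; ring
    · congr 1
      rw [show f * (X ^ J * a * b * (1 + S)) = X ^ J * a * (b * f) * (1 + S) by ring, hbf]; ring
    · congr 1; ring
  have hVU2 : V2 * U2 = f • (1 : Matrix (Fin r) (Fin r) A[X]) := by
    simp only [U2, V2, Matrix.fromCols_mul_fromRows, Matrix.smul_mul,
      Matrix.mul_smul, smul_smul, Matrix.mul_one, Matrix.one_mul, k2, ← add_smul]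
    congr 1
    have : X ^ J * a * (X ^ j) = S := by rw [hS]; ring
    linear_combination (S * (2 - S ^ 2)) * f * this
  have hE : E * E = E := by
    apply smul_mat_inj (mul_ne_zero hfm.ne_zero hfm.ne_zero)
    calc (f * f) • (E * E) = (f • E) * (f • E) := by
          rw [Matrix.smul_mul, Matrix.mul_smul, smul_smul]
      _ = U2 * (V2 * U2) * V2 := by rw [← hUV2]; simp only [Matrix.mul_assoc]
      _ = _ := by rw [hVU2, Matrix.mul_smul, Matrix.mul_one, Matrix.smul_mul, hUV2, smul_smul]
  have hEfree := (free_of_monic' hA E hE f hfm U2 V2 hUV2 hVU2).map ψ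
  obtain ⟨y, hy⟩ : ∃ y, ψ X * y = 1 :=
    (IsLocalization.Away.algebraMap_isUnit (S := R) (X : A[X])).exists_right_inv
  have hx0 : ψ X ≠ 0 := left_ne_zero_of_mul_eq_one hy
  have hyj : ψ X ^ j * y ^ j = 1 := by rw [← mul_pow, hy, one_pow]
  have hf0' : ψ f ≠ 0 := by
    rw [Ne, map_eq_zero_iff ψ hψi]; exact hfm.ne_zero
  have l1 : U'.map ψ * V'.map ψ = (ψ X ^ j * ψ f) • e := by
    apply smul_mat_inj (pow_ne_zero J hx0)
    have := congrArg (fun M => M.map ψ) k1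
    simp only [map_smul_mat, he1, Matrix.map_mul, map_mul, map_pow] at this
    rw [this, smul_smul, smul_smul]
    congr 1; ring
  have l2 : V'.map ψ * U'.map ψ = (ψ X ^ j * ψ f) • (1 : Matrix (Fin r) (Fin r) R) := by
    have := congrArg (fun M => M.map ψ) k2
    simpa only [map_smul_mat, Matrix.map_mul, map_mul, map_pow, map_one_mat] using this
  have hFne : ψ X ^ j * ψ f ≠ 0 := mul_ne_zero (pow_ne_zero _ hx0) hf0'
  have l3 : e * U'.map ψ = U'.map ψ := by
    apply smul_mat_inj hFne
    rw [← Matrix.smul_mul, ← l1, Matrix.mul_assoc, l2, Matrix.mul_smul, Matrix.mul_one]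
  have l4 : V'.map ψ * e = V'.map ψ := by
    apply smul_mat_inj hFne
    rw [← Matrix.mul_smul, ← l1, ← Matrix.mul_assoc, l2, Matrix.smul_mul, Matrix.one_mul]
  have hS' : ψ S = ψ a * (ψ X ^ j * ψ X ^ J) := by rw [hS]; simp [pow_add]
  have hbf' : ψ b * ψ f = 1 - ψ S := by rw [← map_mul, hbf]; simp
  refine hEfree.trans he
    (Matrix.fromCols (ψ S • e) ((1 - ψ S ^ 2) • U'.map ψ))
    (Matrix.fromRows ((ψ S * (2 - ψ S ^ 2)) • e) ((ψ b * (1 + ψ S) * y ^ j) • V'.map ψ)) ?_ ?_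
  · simp only [Matrix.fromCols_mul_fromRows, Matrix.smul_mul,
      Matrix.mul_smul, smul_smul, he, l1, ← add_smul]
    conv_rhs => rw [← one_smul R e]
    congr 1
    linear_combination (1 - ψ S ^ 2) * (1 + ψ S) * (ψ b * ψ f * hyj + hbf')
  · simp only [E, Matrix.fromRows_mul_fromCols, Matrix.fromBlocks_map, Matrix.smul_mul,
      Matrix.mul_smul, smul_smul, he, l2, l3, l4, map_smul_mat, he1, map_one_mat]
    simp only [map_mul, map_pow, map_sub, map_add, map_one, map_ofNat]
    congr 1
    · congr 1
      linear_combination ψ S * (2 - ψ S ^ 2) * hS'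
    · congr 1; ring
    · congr 1
      linear_combination ψ b * (1 + ψ S) * (y ^ j * hS' + ψ a * ψ X ^ J * hyj)
    · congr 1
      linear_combination (1 - ψ S ^ 2) * (1 + ψ S) * (ψ b * ψ f * hyj + hbf')

end Steps

section GroupAlg

open AddMonoidAlgebra in
/-- the comparison map `k[G][X] → k(X)[G]` -/
noncomputable def phi (k G : Type*) [Field k] [AddCommMonoid G] :
    (AddMonoidAlgebra k G)[X] →+* AddMonoidAlgebra (FractionRing k[X]) G :=
  (AddMonoidAlgebra.mapRingHom G (algebraMap k[X] (FractionRing k[X]))).comp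
    (((Polynomial.toFinsuppIso (AddMonoidAlgebra k G)).trans
      (AddMonoidAlgebra.commRingEquiv.trans
        (AddMonoidAlgebra.mapRingEquiv G (Polynomial.toFinsuppIso k).symm))) : _ →+* _)

variable {k G : Type*} [Field k] [AddCommMonoid G]

lemma phi_inj : Function.Injective (phi k G) := by
  have h : Function.Injective
      (AddMonoidAlgebra.mapRingHom G (algebraMap k[X] (FractionRing k[X]))) := by
    intro x y hxy
    refine AddMonoidAlgebra.coeff_injective (Finsupp.ext fun g => ?_)
    apply IsFractionRing.injective k[X] (FractionRing k[X])
    have := congrArg (fun z => z.coeff g) hxy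
    simpa using this
  exact h.comp (RingEquiv.injective _)

lemma phi_monomial (i : ℕ) (g : G) (c : k) :
    phi k G (monomial i (AddMonoidAlgebra.single g c)) =
      AddMonoidAlgebra.single g (algebraMap k[X] _ (monomial i c)) := by
  simp [phi]

lemma phi_const (f : k[X]) :
    phi k G (mapRingHom (algebraMap k (AddMonoidAlgebra k G)) f) =
      AddMonoidAlgebra.single 0 (algebraMap k[X] _ f) := by
  induction f using Polynomial.induction_on' with
  | add p q hp hq => rw [map_add, map_add, hp, hq, map_add, AddMonoidAlgebra.single_add]
  | monomial i c =>
    rw [coe_mapRingHom, map_monomial]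
    exact phi_monomial i 0 c

lemma phi_single (f : k[X]) (g : G) : ∃ p,
    phi k G p = AddMonoidAlgebra.single g (algebraMap k[X] _ f) := by
  refine ⟨mapRingHom (algebraMap k (AddMonoidAlgebra k G)) f *
    monomial 0 (AddMonoidAlgebra.single g 1), ?_⟩
  rw [map_mul, phi_const, phi_monomial, AddMonoidAlgebra.single_mul_single]
  simp

lemma phi_X : IsUnit (phi k G X) := by
  have h : phi k G X = AddMonoidAlgebra.single 0 (algebraMap k[X] _ X) := by
    rw [← phi_const]; simp
  rw [h]
  refine IsUnit.of_mul_eq_one (AddMonoidAlgebra.single 0 (algebraMap k[X] (FractionRing k[X]) X)⁻¹) ?_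
  rw [AddMonoidAlgebra.single_mul_single, mul_inv_cancel₀ (by simp), add_zero]
  rfl

lemma phi_clear (b : AddMonoidAlgebra (FractionRing k[X]) G) :
    ∃ f : k[X], f.Monic ∧ ∃ p, phi k G p =
      phi k G (mapRingHom (algebraMap k (AddMonoidAlgebra k G)) f) * b := by
  classical
  suffices H : ∃ f : k[X], f ≠ 0 ∧ ∃ p, phi k G p =
      phi k G (mapRingHom (algebraMap k (AddMonoidAlgebra k G)) f) * b by
    obtain ⟨f, hf, p, hp⟩ := H
    refine ⟨f * C f.leadingCoeff⁻¹, monic_mul_leadingCoeff_inv hf,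
      mapRingHom (algebraMap k (AddMonoidAlgebra k G)) (C f.leadingCoeff⁻¹) * p, ?_⟩
    rw [map_mul, hp, map_mul (mapRingHom _), map_mul (phi k G)]
    ring
  induction b using AddMonoidAlgebra.induction_linear with
  | zero => exact ⟨1, one_ne_zero, 0, by simp⟩
  | add x y hx hy =>
    obtain ⟨f, hf, p, hp⟩ := hx
    obtain ⟨g, hg, q, hq⟩ := hy
    refine ⟨f * g, mul_ne_zero hf hg,
      mapRingHom (algebraMap k (AddMonoidAlgebra k G)) g * p +
      mapRingHom (algebraMap k (AddMonoidAlgebra k G)) f * q, ?_⟩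
    rw [map_add, map_mul, map_mul, hp, hq, map_mul (mapRingHom _), map_mul (phi k G)]
    ring
  | single g c =>
    obtain ⟨⟨n, d⟩, hd⟩ := IsLocalization.surj (nonZeroDivisors k[X]) c
    obtain ⟨p, hp⟩ := phi_single n g
    refine ⟨d, nonZeroDivisors.ne_zero d.2, p, ?_⟩
    rw [hp, phi_const, AddMonoidAlgebra.single_mul_single, zero_add, ← hd, mul_comm]

universe u v

/-- all fields in universe `u` satisfy QS for the monoid algebra of `G` -/
def Good (G : Type v) [AddCommMonoid G] : Prop :=
  ∀ (k : Type u) [Field k], QS (AddMonoidAlgebra k G)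

theorem Good.equiv {G H : Type*} [AddCommMonoid G] [AddCommMonoid H] (h : Good.{u} G)
    (σ : G ≃+ H) : Good.{u} H := fun k _ =>
  (h k).of_equiv (AddMonoidAlgebra.mapDomainRingEquiv k σ)

theorem Good.nat {G : Type*} [AddCommMonoid G] [TwoUniqueSums G] (h : Good.{u} G) :
    Good.{u} (ℕ × G) := fun k _ => by
  have : IsDomain (AddMonoidAlgebra k G) := NoZeroDivisors.to_isDomain _
  have h1 := poly_step (k := k) (h k) (h (FractionRing k[X])) (phi k G) phi_inj phi_clear
  exact h1.of_equiv ((Polynomial.toFinsuppIso _).trans AddMonoidAlgebra.curryRingEquiv.symm)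

theorem Good.int {G : Type*} [AddCommMonoid G] [TwoUniqueSums G] (h : Good.{u} G) :
    Good.{u} (ℤ × G) := fun k _ => by
  have : IsDomain (AddMonoidAlgebra k G) := NoZeroDivisors.to_isDomain _
  have : IsDomain (LaurentPolynomial (AddMonoidAlgebra k G)) := NoZeroDivisors.to_isDomain _
  have h1 := laurent_step (k := k) (h k) (h (FractionRing k[X])) (phi k G) phi_inj phi_clear phi_X
    (LaurentPolynomial (AddMonoidAlgebra k G))
  exact h1.of_equiv AddMonoidAlgebra.curryRingEquiv.symm

theorem good_nat (b : ℕ) : Good.{u} (Fin b → ℕ) := by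
  induction b with
  | zero =>
    intro k _
    exact (QS.of_pid k).of_equiv (AddMonoidAlgebra.uniqueRingEquiv (Fin 0 → ℕ)).symm
  | succ b ih =>
    refine ih.nat.equiv
      { Fin.consEquiv (fun _ : Fin (b + 1) => ℕ) with
        map_add' := ?_ }
    rintro ⟨x, y⟩ ⟨x', y'⟩
    ext i
    refine Fin.cases ?_ (fun i => ?_) i <;> simp [Fin.consEquiv]

theorem good_mixed (a b : ℕ) : Good.{u} ((Fin a → ℤ) × (Fin b → ℕ)) := by
  induction a with
  | zero =>
    exact (good_nat b).equiv (AddEquiv.uniqueProd (M := (Fin b → ℕ)) (N := (Fin 0 → ℤ))).symm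
  | succ a ih =>
    refine ih.int.equiv (AddEquiv.prodAssoc.symm.trans (AddEquiv.prodCongr
      { Fin.consEquiv (fun _ : Fin (a + 1) => ℤ) with
        map_add' := ?_ } (AddEquiv.refl _)))
    rintro ⟨x, y⟩ ⟨x', y'⟩
    ext i
    refine Fin.cases ?_ (fun i => ?_) i <;> simp [Fin.consEquiv]

end GroupAlg

section Final

/-- the exponent map -/
def expo (a b : ℕ) : ((Fin a ⊕ Fin b) →₀ ℕ) →+ ((Fin a → ℤ) × (Fin b → ℕ)) where
  toFun m := (fun i => (m (Sum.inl i) : ℤ), fun i => m (Sum.inr i))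
  map_zero' := by ext <;> simp
  map_add' x y := by ext <;> simp

lemma expo_inj (a b : ℕ) : Function.Injective (expo a b) := by
  intro x y h
  have h1 := congrArg Prod.fst h
  have h2 := congrArg Prod.snd h
  ext i
  rcases i with i | i
  · exact Int.ofNat_injective (congrFun h1 i)
  · exact congrFun h2 i

/-- the map to the monoid algebra -/
noncomputable def chi (k : Type*) [Field k] (a b : ℕ) :
    MvPolynomial (Fin a ⊕ Fin b) k →+* AddMonoidAlgebra k ((Fin a → ℤ) × (Fin b → ℕ)) :=
  AddMonoidAlgebra.mapDomainRingHom k (expo a b)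

variable (k : Type*) [Field k] (a b : ℕ)

lemma chi_inj : Function.Injective (chi k a b) :=
  AddMonoidAlgebra.mapDomain_injective (expo_inj a b)

lemma chi_monomial (m : (Fin a ⊕ Fin b) →₀ ℕ) (c : k) :
    chi k a b (MvPolynomial.monomial m c) = AddMonoidAlgebra.single (expo a b m) c :=
  AddMonoidAlgebra.mapDomain_single ..

/-- exponents supported on the invertible variables -/
noncomputable def mN {a : ℕ} (b : ℕ) (N : Fin a → ℕ) : (Fin a ⊕ Fin b) →₀ ℕ :=
  Finsupp.equivFunOnFinite.symm (Sum.elim N 0)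

lemma mN_mem (N : Fin a → ℕ) : MvPolynomial.monomial (mN b N) (1 : k) ∈ Submonoid.closure
        (Set.range (fun i : Fin a =>
          (MvPolynomial.X (Sum.inl i) : MvPolynomial (Fin a ⊕ Fin b) k))) := by
  rw [MvPolynomial.monomial_eq, Finsupp.prod_fintype _ _ (by simp), Fintype.prod_sum_type]
  simp only [mN, map_one, one_mul, Finsupp.equivFunOnFinite_symm_apply_apply, Sum.elim_inl,
    Sum.elim_inr, Pi.zero_apply, pow_zero, Finset.prod_const_one, mul_one]
  exact Submonoid.prod_mem _ fun i _ =>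
    Submonoid.pow_mem _ (Submonoid.subset_closure (Set.mem_range_self i)) _

lemma chi_isLocalization :
    letI := (chi k a b).toAlgebra
    IsLocalization (Submonoid.closure
        (Set.range (fun i : Fin a =>
          (MvPolynomial.X (Sum.inl i) : MvPolynomial (Fin a ⊕ Fin b) k))))
      (AddMonoidAlgebra k ((Fin a → ℤ) × (Fin b → ℕ))) := by
  letI := (chi k a b).toAlgebra
  have hal : algebraMap (MvPolynomial (Fin a ⊕ Fin b) k)
    (AddMonoidAlgebra k ((Fin a → ℤ) × (Fin b → ℕ))) = chi k a b := rfl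
  constructor
  constructor
  · rintro ⟨y, hy⟩
    simp only [hal]
    induction hy using Submonoid.closure_induction with
    | mem x hx =>
      obtain ⟨i, rfl⟩ := hx
      have : chi k a b (MvPolynomial.X (Sum.inl i)) =
        AddMonoidAlgebra.single (expo a b (Finsupp.single (Sum.inl i) 1)) 1 := chi_monomial k a b _ _
      simp only [this]
      refine IsUnit.of_mul_eq_one (AddMonoidAlgebra.single
        (-(expo a b (Finsupp.single (Sum.inl i) 1)).1, 0) 1) ?_
      rw [AddMonoidAlgebra.single_mul_single, one_mul, AddMonoidAlgebra.one_def]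
      congr 1
      ext j <;> simp [expo]
    | one => simp
    | mul x y _ _ hx hy => rw [map_mul]; exact hx.mul hy
  · intro z
    simp only [hal]
    induction z using AddMonoidAlgebra.induction_linear with
    | zero => exact ⟨(0, 1), by simp⟩
    | add x y hx hy =>
      obtain ⟨⟨p, s⟩, hp⟩ := hx
      obtain ⟨⟨q, t⟩, hq⟩ := hy
      refine ⟨(p * t + q * s, s * t), ?_⟩
      simp only [map_add, map_mul, Submonoid.coe_mul] at hp hq ⊢
      rw [← hp, ← hq]
      ring
    | single g c =>
      let N : Fin a → ℕ := fun i => (-(g.1 i)).toNat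
      refine ⟨(MvPolynomial.monomial (Finsupp.equivFunOnFinite.symm
        (Sum.elim (fun i => (g.1 i).toNat) g.2)) c, ⟨_, mN_mem k a b N⟩), ?_⟩
      simp only [chi_monomial]
      rw [AddMonoidAlgebra.single_mul_single, mul_one]
      congr 1
      ext j
      · simp [expo, mN, N]
        omega
      · simp [expo, mN]
  · intro x y h
    exact ⟨1, by rw [chi_inj k a b h]⟩

theorem final_QS (R : Type*) [CommRing R] [Algebra (MvPolynomial (Fin a ⊕ Fin b) k) R]
    [IsLocalization
      (Submonoid.closure
        (Set.range (fun i : Fin a =>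
          (MvPolynomial.X (Sum.inl i) : MvPolynomial (Fin a ⊕ Fin b) k)))) R] : QS R := by
  letI := (chi k a b).toAlgebra
  haveI := chi_isLocalization k a b
  exact (good_mixed a b k).of_equiv (IsLocalization.algEquiv (Submonoid.closure
        (Set.range (fun i : Fin a =>
          (MvPolynomial.X (Sum.inl i) : MvPolynomial (Fin a ⊕ Fin b) k))))
    (AddMonoidAlgebra k ((Fin a → ℤ) × (Fin b → ℕ))) R).toRingEquiv

end Final

end QSProof

end QSSection

open MvPolynomial

/-- Every finitely generated projective module over the mixed Laurent polynomial
ring `k[x₁^{±1}, …, x_a^{±1}, y₁, …, y_b]` over a field `k` — i.e. the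
localization of `k[x₁, …, x_a, y₁, …, y_b]` at the multiplicative set generated
by `x₁, …, x_a` — is free (Swan's extension of Quillen–Suslin). -/
theorem projective_module_over_mixed_laurent_ring_free
    (k : Type*) [Field k] (a b : ℕ)
    (R : Type*) [CommRing R] [Algebra (MvPolynomial (Fin a ⊕ Fin b) k) R]
    [IsLocalization
      (Submonoid.closure
        (Set.range (fun i : Fin a =>
          (X (Sum.inl i) : MvPolynomial (Fin a ⊕ Fin b) k)))) R]
    (P : Type*) [AddCommGroup P] [Module R P]
    [Module.Finite R P] [Module.Projective R P] :
    Module.Free R P := by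
  exact QSProof.QS.free (QSProof.final_QS k a b R) P
end

section
/- Let k be a field and K a field with k ⊆ K ⊆ k(t₁, ..., tₙ) such that K has transcendence degree 1 over k. Then K is isomorphic (over k) to a rational function field k(u) in one variable, provided k is algebraically closed of characteristic 0. -/
open Polynomial in
/-- If `K` is algebraic over `k(x)`, and `x = f / g` specializes along `φ` to something
transcendental, then `K` lies in the local ring of `φ`, hence embeds in the target. -/
lemma specialize_field {k A F L : Type*} [Field k] [CommRing A] [IsDomain A]
    [IsIntegrallyClosed A] [Algebra k A] [Field F] [Algebra A F] [IsFractionRing A F]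
    [Algebra k F] [IsScalarTower k A F] [Field L] [Algebra k L] (φ : A →ₐ[k] L)
    (K : IntermediateField k F) (x : K) (hK : Algebra.IsAlgebraic (IntermediateField.adjoin k {x}) K)
    (f g : A) (hx : (x : F) = algebraMap A F f / algebraMap A F g) (hg : φ g ≠ 0)
    (ht : Transcendental k (φ f / φ g)) :
    ∃ θ : K →ₐ[k] L, θ x = φ f / φ g := by
  let M : Submonoid A := (nonZeroDivisors L).comap φ
  have memM : ∀ a, a ∈ M ↔ φ a ≠ 0 := fun a => by
    simp [M, Submonoid.mem_comap, mem_nonZeroDivisors_iff_ne_zero]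
  have hM : M ≤ nonZeroDivisors A := by
    intro a ha
    rw [mem_nonZeroDivisors_iff_ne_zero]
    rintro rfl
    exact (memM 0).1 ha (map_zero φ)
  let O := Localization.subalgebra.ofField F M hM
  have : IsLocalization M O := Localization.subalgebra.isLocalization_ofField F M hM
  have : IsFractionRing O F := Localization.subalgebra.isFractionRing_ofField F M hM
  have : IsIntegrallyClosed O := isIntegrallyClosed_of_isLocalization O M hM
  have memO : ∀ z : F, z ∈ O ↔ ∃ (a s : A) (_ : s ∈ M), z = algebraMap A F a * (algebraMap A F s)⁻¹ :=
    fun z => Iff.rfl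
  have inj : ∀ a : A, algebraMap A F a = 0 → a = 0 := fun a h =>
    (map_eq_zero_iff _ (IsFractionRing.injective A F)).1 h
  let ψ : O →+* L := IsLocalization.lift (M := M) (g := (φ : A →+* L))
    (fun y => (isUnit_iff_ne_zero).2 ((memM y).1 y.2))
  have ψA : ∀ a : A, ψ (algebraMap A O a) = φ a := fun a => IsLocalization.lift_eq _ a
  have hgM : g ∈ M := (memM g).2 hg
  have ψdiv : ∀ (z : O) (a s : A), s ∈ M → (z : F) = algebraMap A F a * (algebraMap A F s)⁻¹ →
      ψ z = φ a / φ s := by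
    intro z a s hs hz
    have hs' := (memM s).1 hs
    have hsF : algebraMap A F s ≠ 0 := fun h => hs' (by rw [inj s h, map_zero])
    rw [eq_div_iff hs', ← ψA s, ← ψA a, ← map_mul]
    congr 1
    apply Subtype.ext
    change (z : F) * algebraMap A F s = algebraMap A F a
    rw [hz, inv_mul_cancel_right₀ hsF]
  have xO : (x : F) ∈ O := (memO _).2 ⟨f, g, hgM, by rw [hx, div_eq_mul_inv]⟩
  have ψx : ψ ⟨x, xO⟩ = φ f / φ g := ψdiv _ f g hgM (by simp only [hx, div_eq_mul_inv])
  -- scalars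
  have cO : ∀ c : k, algebraMap k F c = algebraMap A F (algebraMap k A c) := fun c =>
    IsScalarTower.algebraMap_apply k A F c
  have ψc : ∀ (c : k) (h : algebraMap k F c ∈ O), ψ ⟨algebraMap k F c, h⟩ = algebraMap k L c := by
    intro c h
    rw [← φ.commutes c, ← ψA]
    congr 1
    exact Subtype.ext (cO c)
  have cmem : ∀ c : k, algebraMap k F c ∈ O := fun c => by
    rw [cO]; exact O.algebraMap_mem _
  have polyO : ∀ p : k[X], ∃ h : aeval (x : F) p ∈ O, ψ ⟨_, h⟩ = aeval (φ f / φ g) p := by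
    intro p
    induction p using Polynomial.induction_on' with
    | add p q hp hq =>
      obtain ⟨h1, e1⟩ := hp
      obtain ⟨h2, e2⟩ := hq
      refine ⟨by rw [map_add]; exact O.add_mem h1 h2, ?_⟩
      rw [map_add (aeval (φ f / φ g)), ← e1, ← e2, ← map_add ψ]
      congr 1
      exact Subtype.ext (by simp)
    | monomial n a =>
      refine ⟨by rw [aeval_monomial]; exact O.mul_mem (cmem a) (O.pow_mem xO n), ?_⟩
      rw [aeval_monomial (φ f / φ g), ← ψx, ← ψc a (cmem a), ← map_pow, ← map_mul]
      congr 1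
      exact Subtype.ext (by simp [aeval_monomial])
  have invO : ∀ z : O, ψ z ≠ 0 → (z : F)⁻¹ ∈ O := by
    intro z hz
    obtain ⟨a, s, hs, e⟩ := (memO _).1 z.2
    rw [ψdiv z a s hs e] at hz
    refine (memO _).2 ⟨s, a, (memM a).2 fun h => hz (by rw [h, zero_div]), ?_⟩
    rw [e, mul_inv, inv_inv, mul_comm]
  have adjO : ∀ z : IntermediateField.adjoin k {x}, ((z : K) : F) ∈ O := by
    intro z
    obtain ⟨r, s, e⟩ := (IntermediateField.mem_adjoin_simple_iff k (z : K)).1 z.2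
    have e' : ((z : K) : F) = aeval (x : F) r / aeval (x : F) s := by
      rw [e]
      have := fun p : k[X] => Polynomial.aeval_algHom_apply K.val x p
      simp only [IntermediateField.coe_val] at this
      rw [this, this]; simp
    rw [e', div_eq_mul_inv]
    refine O.mul_mem (polyO r).1 ?_
    by_cases hs : s = 0
    · rw [hs, map_zero, inv_zero]; exact O.zero_mem
    · obtain ⟨h, eh⟩ := polyO s
      exact invO ⟨_, h⟩ (by rw [eh]; exact fun h0 => hs ((transcendental_iff.1 ht) s h0))
  let j : IntermediateField.adjoin k {x} →+* O :=
    (((K.val : K →+* F).comp (algebraMap (IntermediateField.adjoin k {x}) K))).codRestrict O adjO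
  have KO : ∀ y : K, (y : F) ∈ O := by
    intro y
    obtain ⟨p, pm, hp⟩ := (hK.isAlgebraic y).isIntegral
    have : IsIntegral O (y : F) := by
      refine ⟨p.map j, pm.map j, ?_⟩
      rw [eval₂_map]
      have := congrArg (K.val : K →+* F) hp
      rw [hom_eval₂, map_zero] at this
      exact this
    obtain ⟨o, ho⟩ := IsIntegrallyClosed.isIntegral_iff.1 this
    rw [← ho]; exact o.2
  let θ : K →+* L := ψ.comp ((K.val : K →+* F).codRestrict O KO)
  exact ⟨{ θ with commutes' := fun c => ψc c (cmem c) }, ψx⟩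

theorem intermediate_field_trdeg_one_is_rational
    (k : Type*) [Field k] [IsAlgClosed k] [CharZero k]
    (n : ℕ)
    (K : IntermediateField k (FractionRing (MvPolynomial (Fin n) k)))
    (htr : ∃ x : K, IsTranscendenceBasis k (fun _ : Unit => x)) :
    Nonempty (K ≃ₐ[k] RatFunc k) := by
  obtain ⟨x, hx⟩ := htr
  have hK : Algebra.IsAlgebraic (IntermediateField.adjoin k {x}) K := by
    have := hx.isAlgebraic_field
    rwa [Set.range_const] at this
  have xtr : Transcendental k x := hx.1.transcendental ()
  obtain ⟨f, g, hg, hfg⟩ := IsFractionRing.div_surjective (MvPolynomial (Fin n) k)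
    (x : FractionRing (MvPolynomial (Fin n) k))
  have hg0 : g ≠ 0 := nonZeroDivisors.ne_zero hg
  have hnz : ∀ p : MvPolynomial (Fin n) k, p ≠ 0 → ∃ a, MvPolynomial.eval a p ≠ 0 := by
    intro p hp
    by_contra! h
    exact hp (MvPolynomial.funext fun a => by rw [h a, map_zero])
  obtain ⟨a, ha⟩ := hnz g hg0
  set c := MvPolynomial.eval a f / MvPolynomial.eval a g with hc
  have hh : f - MvPolynomial.C c * g ≠ 0 := by
    intro h
    have h1 : f = MvPolynomial.C c * g := sub_eq_zero.1 h
    apply xtr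
    have : x = algebraMap k K c := by
      apply Subtype.ext
      rw [← hfg, h1, map_mul, mul_div_assoc, div_self, mul_one]
      · exact (IsScalarTower.algebraMap_apply k (MvPolynomial (Fin n) k)
          (FractionRing (MvPolynomial (Fin n) k)) c).symm
      · simpa using hg0
    rw [this]
    exact isAlgebraic_algebraMap c
  obtain ⟨b, hb⟩ := hnz _ (mul_ne_zero hh hg0)
  let φ₀ : MvPolynomial (Fin n) k →ₐ[k] Polynomial k :=
    MvPolynomial.aeval fun i => Polynomial.C (a i) + Polynomial.X * Polynomial.C (b i - a i)
  have ev : ∀ (s : k) (p : MvPolynomial (Fin n) k),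
      Polynomial.aeval s (φ₀ p) = MvPolynomial.eval (fun i => a i + s * (b i - a i)) p := by
    intro s p
    have : (Polynomial.aeval s).comp φ₀ =
        MvPolynomial.aeval (fun i => a i + s * (b i - a i)) := by
      apply MvPolynomial.algHom_ext
      intro i
      simp [φ₀]
    exact DFunLike.congr_fun this p
  have ev0 : ∀ p, Polynomial.aeval (0 : k) (φ₀ p) = MvPolynomial.eval a p := fun p => by
    rw [ev]; simp
  have ev1 : ∀ p, Polynomial.aeval (1 : k) (φ₀ p) = MvPolynomial.eval b p := fun p => by
    rw [ev]; simp
  let φ : MvPolynomial (Fin n) k →ₐ[k] RatFunc k :=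
    (IsScalarTower.toAlgHom k (Polynomial k) (RatFunc k)).comp φ₀
  have φdef : ∀ p, φ p = algebraMap (Polynomial k) (RatFunc k) (φ₀ p) := fun p => rfl
  have φinj := RatFunc.algebraMap_injective k
  have hφg : φ g ≠ 0 := by
    rw [φdef, Ne, map_eq_zero_iff _ φinj]
    intro h
    apply ha
    rw [← ev0, h, map_zero]
  have ht : Transcendental k (φ f / φ g) := by
    apply RatFunc.transcendental_of_ne_C
    rintro ⟨d, hd⟩
    rw [div_eq_iff hφg, φdef, φdef, ← RatFunc.algebraMap_C, ← map_mul] at hd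
    have hd' := φinj hd
    have h0 : MvPolynomial.eval a f = d * MvPolynomial.eval a g := by
      rw [← ev0, ← ev0, hd']; simp
    have h1 : MvPolynomial.eval b f = d * MvPolynomial.eval b g := by
      rw [← ev1, ← ev1, hd']; simp
    have hcd : c = d := by rw [hc, h0, mul_div_cancel_right₀ _ ha]
    apply hb
    simp [h1, hcd]
  obtain ⟨θ, hθ⟩ := specialize_field φ K x hK f g hfg.symm hφg ht
  have hne : θ.fieldRange ≠ ⊥ := by
    intro h
    have : φ f / φ g ∈ θ.fieldRange := ⟨x, hθ⟩
    rw [h, IntermediateField.mem_bot] at this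
    obtain ⟨d, hd⟩ := this
    exact ht (hd ▸ isAlgebraic_algebraMap d)
  exact ⟨(AlgEquiv.ofInjectiveField θ).trans (RatFunc.Luroth.algEquiv hne).symm⟩
end
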